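/- arXiv:1105.6105 — 2 statements merged into one kernel-verified Lean document; each statement's English description precedes it below -/
import Mathlib

section
/- Let ω be a weight on ℝ^d (continuous, symmetric, nonnegative, submultiplicative), let μ be ω-moderate, and let Φ = (φ_1,…,φ_r) with each φ_i ∈ W^1_ω. If V^{p₀}_μ(Φ) is a closed subspace of L^{p₀}_μ and of W^{p₀}_μ for some p₀ ∈ [1,∞], then V^p_μ(Φ) is a closed subspace of L^p_μ and of W^p_μ for every p ∈ [1,∞]. -/
open MeasureTheory Filter Topology ENNReal Real Matrix

noncomputable section

variable {d : ℕ}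

/-- embedding of `ℤ^d` into `ℝ^d` -/
def zc (j : Fin d → ℤ) : Fin d → ℝ := fun i => (j i : ℝ)

/-- weighted `ℓ^p_ν` norm of a sequence on `ℤ^d` -/
def lpW (p : ℝ≥0∞) (ν : (Fin d → ℝ) → ℝ) (c : (Fin d → ℤ) → ℂ) : ℝ≥0∞ :=
  if p = ∞ then ⨆ j, (‖c j‖₊ : ℝ≥0∞) * ENNReal.ofReal (ν (zc j))
  else (∑' j, ((‖c j‖₊ : ℝ≥0∞) * ENNReal.ofReal (ν (zc j))) ^ p.toReal) ^ (1 / p.toReal)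

/-- weighted `L^p_ν` norm -/
def LpW (p : ℝ≥0∞) (ν : (Fin d → ℝ) → ℝ) (f : (Fin d → ℝ) → ℂ) : ℝ≥0∞ :=
  eLpNorm (fun x => ν x • f x) p volume

/-- the unit cube `[0,1]^d` -/
def cube : Set (Fin d → ℝ) := Set.Icc 0 1

/-- local essential supremum of `|f|` on `j + [0,1]^d` -/
def amal (f : (Fin d → ℝ) → ℂ) (j : Fin d → ℤ) : ℝ≥0∞ :=
  essSup (fun x => (‖f (x + zc j)‖₊ : ℝ≥0∞)) (volume.restrict cube)

/-- Wiener amalgam norm `W^p_ν` -/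
def WW (p : ℝ≥0∞) (ν : (Fin d → ℝ) → ℝ) (f : (Fin d → ℝ) → ℂ) : ℝ≥0∞ :=
  if p = ∞ then ⨆ j, amal f j * ENNReal.ofReal (ν (zc j))
  else (∑' j, (amal f j * ENNReal.ofReal (ν (zc j))) ^ p.toReal) ^ (1 / p.toReal)

/-- the norm of `𝓛^p_ν` -/
def curlyL (p : ℝ≥0∞) (ν : (Fin d → ℝ) → ℝ) (f : (Fin d → ℝ) → ℂ) : ℝ≥0∞ :=
  if p = ∞ then
    essSup (fun x => ∑' j, (‖f (x + zc j)‖₊ : ℝ≥0∞) * ENNReal.ofReal (ν (x + zc j)))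
      (volume.restrict cube)
  else (∫⁻ x in cube,
      (∑' j, (‖f (x + zc j)‖₊ : ℝ≥0∞) * ENNReal.ofReal (ν (x + zc j))) ^ p.toReal) ^ (1 / p.toReal)

/-- a weight: continuous, symmetric, nonnegative, submultiplicative -/
def IsWeight (ω : (Fin d → ℝ) → ℝ) : Prop :=
  Continuous ω ∧ (∀ x, ω (-x) = ω x) ∧ (∀ x, 0 ≤ ω x) ∧ ∀ x y, ω (x + y) ≤ ω x * ω y

/-- `μ` is an `ω`-moderate weight -/
def IsModerate (ω μ : (Fin d → ℝ) → ℝ) : Prop :=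
  (∀ x, 0 ≤ μ x) ∧ ∃ C₀ > 0, ∀ x y, μ (x + y) ≤ C₀ * ω x * μ y

/-- semi-convolution of a function and a sequence -/
def semiConv (f : (Fin d → ℝ) → ℂ) (c : (Fin d → ℤ) → ℂ) : (Fin d → ℝ) → ℂ :=
  fun x => ∑' j, c j * f (x - zc j)

/-- Fourier transform `φ̂(ξ) = ∫ φ(x) e^{-i x·ξ} dx` -/
def FT (φ : (Fin d → ℝ) → ℂ) (ξ : Fin d → ℝ) : ℂ :=
  ∫ x : Fin d → ℝ, φ x * Complex.exp (-(Complex.I * (∑ i, (x i : ℂ) * (ξ i : ℂ))))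

/-- the Gram matrix `[Φ̂,Φ̂](ξ)` -/
def Gram {r : ℕ} (Φ : Fin r → (Fin d → ℝ) → ℂ) (ξ : Fin d → ℝ) : Matrix (Fin r) (Fin r) ℂ :=
  Matrix.of fun i i' =>
    ∑' k : Fin d → ℤ, FT (Φ i) (ξ + (2 * π) • zc k) * star (FT (Φ i') (ξ + (2 * π) • zc k))

/-- the dimension of the span of a family of vectors in `ℂ^r` -/
def rankSpan {r : ℕ} (v : (Fin d → ℤ) → (Fin r → ℂ)) : ℕ :=
  Module.finrank ℂ (Submodule.span ℂ (Set.range v))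

/-- the synthesis operator `S_Φ` -/
def SynOp {r : ℕ} (Φ : Fin r → (Fin d → ℝ) → ℂ) (c : Fin r → (Fin d → ℤ) → ℂ) :
    (Fin d → ℝ) → ℂ :=
  fun x => ∑ i, ∑' j, c i j * Φ i (x - zc j)

/-- the weighted shift-invariant space `V^p_μ(Φ)` -/
def VSI {r : ℕ} (p : ℝ≥0∞) (μ : (Fin d → ℝ) → ℝ) (Φ : Fin r → (Fin d → ℝ) → ℂ) :
    Set ((Fin d → ℝ) → ℂ) :=
  {f | AEStronglyMeasurable f volume ∧ LpW p μ f < ∞ ∧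
    ∃ c : Fin r → (Fin d → ℤ) → ℂ, (∀ i, lpW p μ (c i) < ∞) ∧ f =ᵐ[volume] SynOp Φ c}

/-- `ℓ^p_μ`-stability of the synthesis operator -/
def Stable {r : ℕ} (p : ℝ≥0∞) (μ : (Fin d → ℝ) → ℝ) (Φ : Fin r → (Fin d → ℝ) → ℂ) : Prop :=
  ∃ C : ℝ≥0∞, 0 < C ∧ C < ∞ ∧ ∀ c : Fin r → (Fin d → ℤ) → ℂ, (∀ i, lpW p μ (c i) < ∞) →
    C⁻¹ * (∑ i, lpW p μ (c i)) ≤ LpW p μ (SynOp Φ c) ∧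
      LpW p μ (SynOp Φ c) ≤ C * ∑ i, lpW p μ (c i)

/-- `{φ_i(·-j)}` is a `p`-frame for `V^p_μ(Φ)` -/
def PFrame {r : ℕ} (p : ℝ≥0∞) (μ : (Fin d → ℝ) → ℝ) (Φ : Fin r → (Fin d → ℝ) → ℂ) : Prop :=
  ∃ C : ℝ≥0∞, 0 < C ∧ C < ∞ ∧ ∀ f ∈ VSI p μ Φ,
    C⁻¹ * LpW p μ f ≤ ∑ i, lpW p μ (fun j => ∫ x, f x * Φ i (x - zc j)) ∧
      ∑ i, lpW p μ (fun j => ∫ x, f x * Φ i (x - zc j)) ≤ C * LpW p μ f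

/-- `V^p_μ(Φ)` is closed in `L^p_μ` -/
def VClosedL {r : ℕ} (p : ℝ≥0∞) (μ : (Fin d → ℝ) → ℝ) (Φ : Fin r → (Fin d → ℝ) → ℂ) : Prop :=
  ∀ f : (Fin d → ℝ) → ℂ, AEStronglyMeasurable f volume → LpW p μ f < ∞ →
    ∀ F : ℕ → (Fin d → ℝ) → ℂ, (∀ n, F n ∈ VSI p μ Φ) →
      Tendsto (fun n => LpW p μ (f - F n)) atTop (𝓝 0) → f ∈ VSI p μ Φ

/-- `V^p_μ(Φ)` is closed in `W^p_μ` -/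
def VClosedW {r : ℕ} (p : ℝ≥0∞) (μ : (Fin d → ℝ) → ℝ) (Φ : Fin r → (Fin d → ℝ) → ℂ) : Prop :=
  ∀ f : (Fin d → ℝ) → ℂ, AEStronglyMeasurable f volume → WW p μ f < ∞ →
    ∀ F : ℕ → (Fin d → ℝ) → ℂ, (∀ n, F n ∈ VSI p μ Φ) →
      Tendsto (fun n => WW p μ (f - F n)) atTop (𝓝 0) → f ∈ VSI p μ Φ

end

open MeasureTheory Filter Topology ENNReal Real Matrix

/-!
Fix the exponent `s` inside the cells and cut functions into weighted pieces on the unit cubes.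
This identifies the amalgam `W(L^s, ℓ^p_μ)` with `ℓ^p(ℤ^d; L^s)`, and the synthesis operator with
a matrix of operators `B` dominated by convolution with a summable sequence. By the open mapping
theorem, `V^p_μ(Φ)` is closed in `W(L^s, ℓ^p_μ)` if and only if every solvable equation
`B y = B x` has a solution with `‖y‖_p ≤ C ‖B x‖_p`.

Bounded solvability passes from `p` to `∞`, and from `∞` to every `q`. Gluing solutions of localized
equations by a partition of unity of large scale gives a parametrix whose commutator error is as
small as desired. On an amalgam norm it improves any solvability constant to one depending only on
`C` and `d`. The improved constant therefore propagates along a chain of norms, each within a factor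
`2` of the next: `max(‖·‖_∞, 2^{-i} ‖·‖_p)` on the way from `p` to `∞`, suprema of `ℓ^q` norms over
the translates of a growing finite window on the way from `∞` to `q`. Weak-star compactness of the
bounded sequences of coefficient vectors, which are finite-dimensional, gives the limit. The same
compactness allows `L^∞` to be replaced by `L^1` as local space when `p = ∞`.

Closedness in `W^{p₀}_μ = W(L^∞, ℓ^{p₀}_μ)` thus gives closedness in `W(L^1, ℓ^p_μ)`, whose norm is
weaker than those of `L^p_μ` and `W^p_μ`.
-/

universe u

namespace ShiftInvariant

/-! ### `ℓ^p` norms of families of extended nonnegative numbers -/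

/-- The `ℓ^p` norm of a family in `[0, ∞]`; the families need not be summable, nor even finite. -/
noncomputable def ellNorm {ι : Type*} (p : ℝ≥0∞) (a : ι → ℝ≥0∞) : ℝ≥0∞ :=
  if p = ∞ then ⨆ j, a j else (∑' j, a j ^ p.toReal) ^ (1 / p.toReal)

section ellNorm

variable {ι κ : Type*} {p : ℝ≥0∞} {a b : ι → ℝ≥0∞}

theorem ellNorm_top (a : ι → ℝ≥0∞) : ellNorm ∞ a = ⨆ j, a j := if_pos rfl

theorem ellNorm_eq_tsum (hp : 1 ≤ p.toReal) (a : ι → ℝ≥0∞) :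
    ellNorm p a = (∑' j, a j ^ p.toReal) ^ (1 / p.toReal) :=
  if_neg fun h => by norm_num [h] at hp

theorem ellNorm_le_iff (hp : 1 ≤ p.toReal) {M : ℝ≥0∞} :
    ellNorm p a ≤ M ↔ ∀ s : Finset ι, ∑ j ∈ s, a j ^ p.toReal ≤ M ^ p.toReal := by
  rw [ellNorm_eq_tsum hp, one_div, ENNReal.rpow_inv_le_iff (by linarith),
    ENNReal.tsum_eq_iSup_sum, iSup_le_iff]

theorem ellNorm_mono (p : ℝ≥0∞) (h : ∀ j, a j ≤ b j) : ellNorm p a ≤ ellNorm p b := by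
  unfold ellNorm
  split_ifs
  · exact iSup_mono h
  · gcongr with j
    exact h j

theorem ellNorm_comp_equiv (p : ℝ≥0∞) (e : κ ≃ ι) (a : ι → ℝ≥0∞) :
    ellNorm p (fun j => a (e j)) = ellNorm p a := by
  unfold ellNorm
  split_ifs
  · exact e.iSup_comp (g := a)
  · rw [e.tsum_eq fun j => a j ^ p.toReal]

section Fact

variable [Fact (1 ≤ p)]

variable (p) in
theorem le_ellNorm (a : ι → ℝ≥0∞) (j : ι) : a j ≤ ellNorm p a := by
  rcases p.dichotomy with rfl | hp
  · exact (le_iSup a j).trans_eq (ellNorm_top a).symm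
  · have := (ellNorm_le_iff (a := a) hp).1 le_rfl {j}
    rwa [Finset.sum_singleton, ENNReal.rpow_le_rpow_iff (by linarith)] at this

theorem ellNorm_top_le (a : ι → ℝ≥0∞) : ellNorm ∞ a ≤ ellNorm p a :=
  (ellNorm_top a).trans_le (iSup_le (le_ellNorm p a))

theorem ellNorm_le_of_tendsto {l : Filter κ} [l.NeBot] {u : κ → ι → ℝ≥0∞} {M : ℝ≥0∞}
    (hu : ∀ j, Tendsto (fun i => u i j) l (𝓝 (a j))) (hM : ∀ᶠ i in l, ellNorm p (u i) ≤ M) :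
    ellNorm p a ≤ M := by
  rcases p.dichotomy with rfl | hp
  · rw [ellNorm_top]
    exact iSup_le fun j => le_of_tendsto (hu j) (hM.mono fun i hi => (le_ellNorm ∞ _ j).trans hi)
  · refine (ellNorm_le_iff hp).2 fun s => ?_
    exact le_of_tendsto (tendsto_finsetSum s fun j _ =>
      (ENNReal.continuous_rpow_const.tendsto _).comp (hu j))
      (hM.mono fun i hi => (ellNorm_le_iff hp).1 hi s)

theorem ellNorm_add_le (a b : ι → ℝ≥0∞) :
    ellNorm p (fun j => a j + b j) ≤ ellNorm p a + ellNorm p b := by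
  rcases p.dichotomy with rfl | hp
  · rw [ellNorm_top]
    exact iSup_le fun j => add_le_add (le_ellNorm ∞ a j) (le_ellNorm ∞ b j)
  · have h0 : 0 < p.toReal := by linarith
    have partial_le (c : ι → ℝ≥0∞) (s : Finset ι) :
        (∑ j ∈ s, c j ^ p.toReal) ^ (1 / p.toReal) ≤ ellNorm p c := by
      rw [one_div, ENNReal.rpow_inv_le_iff h0]
      exact (ellNorm_le_iff hp).1 le_rfl s
    refine (ellNorm_le_iff hp).2 fun s => ?_
    rw [← ENNReal.rpow_inv_le_iff h0, ← one_div]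
    exact (ENNReal.Lp_add_le s a b hp).trans (add_le_add (partial_le a s) (partial_le b s))

variable (p) in
theorem ellNorm_zero : ellNorm p (fun _ : ι => 0) = 0 := by
  rcases p.dichotomy with rfl | hp
  · simp [ellNorm_top]
  · simp [ellNorm_eq_tsum hp, show 0 < p.toReal by linarith]

theorem ellNorm_sum_le (s : Finset κ) (u : κ → ι → ℝ≥0∞) :
    ellNorm p (fun j => ∑ i ∈ s, u i j) ≤ ∑ i ∈ s, ellNorm p (u i) := by
  classical
  induction s using Finset.induction_on with
  | empty => simp [ellNorm_zero p]
  | insert i s hi ih =>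
    simp only [Finset.sum_insert hi]
    exact (ellNorm_add_le _ _).trans (add_le_add le_rfl ih)

theorem ellNorm_tsum_le (u : κ → ι → ℝ≥0∞) :
    ellNorm p (fun j => ∑' i, u i j) ≤ ∑' i, ellNorm p (u i) :=
  ellNorm_le_of_tendsto (l := atTop) (u := fun (s : Finset κ) j => ∑ i ∈ s, u i j)
    (fun _ => ENNReal.summable.hasSum)
    (Eventually.of_forall fun s => (ellNorm_sum_le s u).trans (ENNReal.sum_le_tsum s))

theorem ellNorm_const_mul (c : ℝ≥0∞) (a : ι → ℝ≥0∞) :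
    ellNorm p (fun j => c * a j) = c * ellNorm p a := by
  rcases p.dichotomy with rfl | hp
  · simp [ellNorm_top, ENNReal.mul_iSup]
  · have h0 : 0 < p.toReal := by linarith
    simp_rw [ellNorm_eq_tsum hp, ENNReal.mul_rpow_of_nonneg _ _ h0.le, ENNReal.tsum_mul_left]
    rw [ENNReal.mul_rpow_of_nonneg _ _ (by positivity), ← ENNReal.rpow_mul,
      mul_one_div_cancel h0.ne', ENNReal.rpow_one]

theorem ellNorm_le_tsum (a : ι → ℝ≥0∞) : ellNorm p a ≤ ∑' j, a j := by
  rcases p.dichotomy with rfl | hp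
  · exact (ellNorm_top a).trans_le (iSup_le ENNReal.le_tsum)
  · refine (ellNorm_le_iff hp).2 fun s => ?_
    calc ∑ j ∈ s, a j ^ p.toReal ≤ (∑ j ∈ s, a j) ^ p.toReal := by
          classical
          induction s using Finset.induction_on with
          | empty => simp
          | insert j s hj ih =>
            rw [Finset.sum_insert hj, Finset.sum_insert hj]
            exact (add_le_add le_rfl ih).trans (ENNReal.add_rpow_le_rpow_add _ _ hp)
      _ ≤ (∑' j, a j) ^ p.toReal := by gcongr; exact ENNReal.sum_le_tsum s

end Fact

section indicator

variable {s : Set ι}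

theorem ellNorm_indicator_le (p : ℝ≥0∞) (h : ∀ j ∈ s, a j ≤ b j) :
    ellNorm p (s.indicator a) ≤ ellNorm p b :=
  ellNorm_mono p (Set.indicator_le h)

theorem ellNorm_indicator_mono (p : ℝ≥0∞) (s : Set ι) (h : ∀ j, a j ≤ b j) :
    ellNorm p (s.indicator a) ≤ ellNorm p (s.indicator b) :=
  ellNorm_mono p fun _ => Set.indicator_le_indicator (h _)

theorem ellNorm_indicator_tsum_le [Fact (1 ≤ p)] (s : Set ι) (u : κ → ι → ℝ≥0∞) :
    ellNorm p (s.indicator fun j => ∑' i, u i j) ≤ ∑' i, ellNorm p (s.indicator (u i)) := by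
  refine le_trans (ellNorm_mono p fun j => ?_) (ellNorm_tsum_le _)
  by_cases hj : j ∈ s <;> simp [hj]

theorem ellNorm_indicator_const_mul [Fact (1 ≤ p)] (s : Set ι) (c : ℝ≥0∞) (a : ι → ℝ≥0∞) :
    ellNorm p (s.indicator fun j => c * a j) = c * ellNorm p (s.indicator a) := by
  rw [← ellNorm_const_mul]
  congr 1
  ext j
  by_cases hj : j ∈ s <;> simp [hj]

theorem le_ellNorm_indicator (p : ℝ≥0∞) [Fact (1 ≤ p)] (a : ι → ℝ≥0∞) {j : ι} (hj : j ∈ s) :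
    a j ≤ ellNorm p (s.indicator a) :=
  (Set.indicator_of_mem hj a).symm.trans_le (le_ellNorm p _ j)

theorem ellNorm_indicator_le_card_mul [Fact (1 ≤ p)] (s : Finset ι) (a : ι → ℝ≥0∞) :
    ellNorm p ((s : Set ι).indicator a) ≤ s.card * ellNorm ∞ ((s : Set ι).indicator a) := by
  refine (ellNorm_le_tsum _).trans ?_
  rw [tsum_eq_sum (s := s) fun k hk => Set.indicator_of_notMem hk a, ← nsmul_eq_mul]
  exact Finset.sum_le_card_nsmul _ _ _ fun k _ => le_ellNorm ∞ _ k

end indicator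

/-- The family `m ↦ ‖a|_{blk⁻¹(m)}‖_p` of `ℓ^p` norms of the restrictions of `a` to the blocks of
a partition of the index set. -/
noncomputable def fiberNorm (p : ℝ≥0∞) (blk : ι → κ) (a : ι → ℝ≥0∞) (m : κ) : ℝ≥0∞ :=
  ellNorm p ((blk ⁻¹' {m}).indicator a)

theorem ellNorm_fiberNorm [Fact (1 ≤ p)] (blk : ι → κ) (a : ι → ℝ≥0∞) :
    ellNorm p (fiberNorm p blk a) = ellNorm p a := by
  classical
  rcases p.dichotomy with rfl | hp
  · simp only [fiberNorm, ellNorm_top]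
    rw [iSup_comm]
    refine iSup_congr fun k => le_antisymm (iSup_le fun m => Set.indicator_le_self _ a k) ?_
    exact le_iSup_of_le (blk k) (by simp)
  · have h0 : 0 < p.toReal := by linarith
    simp only [fiberNorm, ellNorm_eq_tsum hp]
    congr 1
    simp_rw [← ENNReal.rpow_mul, one_div, inv_mul_cancel₀ h0.ne', ENNReal.rpow_one]
    rw [ENNReal.tsum_comm]
    refine tsum_congr fun k => ?_
    rw [tsum_eq_single (blk k) fun m hm => by simp [hm.symm, h0]]
    simp

end ellNorm

/-! ### Shift-bounded norms -/

/-- A functional `n` on families indexed by an additive group that is monotone, positively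
homogeneous and countably subadditive, and for which all shifts have norm at most `K`. -/
structure ShiftBoundedNorm {ι : Type u} [AddCommGroup ι] (n : (ι → ℝ≥0∞) → ℝ≥0∞) (K : ℝ≥0∞) :
    Prop where
  mono : ∀ {a b : ι → ℝ≥0∞}, (∀ j, a j ≤ b j) → n a ≤ n b
  const_mul : ∀ (c : ℝ≥0∞) (a : ι → ℝ≥0∞), n (fun j => c * a j) ≤ c * n a
  tsum : ∀ {κ : Type u} (f : κ → ι → ℝ≥0∞), n (fun j => ∑' i, f i j) ≤ ∑' i, n (f i)
  shift : ∀ (a : ι → ℝ≥0∞) (l : ι), n (fun j => a (j + l)) ≤ K * n a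

/-- Convolution of families on an additive group. -/
noncomputable def discreteConv {ι : Type*} [AddCommGroup ι] (h a : ι → ℝ≥0∞) (j : ι) : ℝ≥0∞ :=
  ∑' k, h (j - k) * a k

/-- The supremum of the `ℓ^q` norms of a family over all translates of the window `S`. -/
noncomputable def windowNorm {ι : Type*} [AddCommGroup ι] (q : ℝ≥0∞) (S : Set ι)
    (a : ι → ℝ≥0∞) : ℝ≥0∞ :=
  ⨆ z : ι, ellNorm q ({k | k - z ∈ S}.indicator a)

section ShiftBoundedNorm

variable {ι : Type u} [AddCommGroup ι] {n : (ι → ℝ≥0∞) → ℝ≥0∞} {K : ℝ≥0∞}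

namespace ShiftBoundedNorm

theorem add (hn : ShiftBoundedNorm n K) (a b : ι → ℝ≥0∞) :
    n (fun j => a j + b j) ≤ n a + n b := by
  have := hn.tsum fun i : ULift.{u} Bool => if i.down then a else b
  simp only [← Equiv.ulift.symm.tsum_eq] at this
  simpa [tsum_fintype] using this

theorem sum (hn : ShiftBoundedNorm n K) {κ : Type u} (s : Finset κ) (f : κ → ι → ℝ≥0∞) :
    n (fun j => ∑ i ∈ s, f i j) ≤ ∑ i ∈ s, n (f i) := by
  have := hn.tsum fun i : s => f i
  simp only [Finset.tsum_subtype s fun i => n (f i)] at this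
  exact (hn.mono fun j => (Finset.tsum_subtype s fun i => f i j).ge).trans this

theorem sum_shift (hn : ShiftBoundedNorm n K) (D : Finset ι) (a : ι → ℝ≥0∞) :
    n (fun j => ∑ δ ∈ D, a (j + δ)) ≤ D.card * K * n a :=
  calc n (fun j => ∑ δ ∈ D, a (j + δ)) ≤ ∑ δ ∈ D, n fun j => a (j + δ) :=
        hn.sum D fun δ j => a (j + δ)
    _ ≤ D.card • (K * n a) := Finset.sum_le_card_nsmul _ _ _ fun δ _ => hn.shift a δ
    _ = D.card * K * n a := by rw [nsmul_eq_mul, mul_assoc]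

theorem sum_shift_sub (hn : ShiftBoundedNorm n K) (D : Finset ι) (a : ι → ℝ≥0∞) :
    n (fun j => ∑ δ ∈ D, a (j - δ)) ≤ D.card * K * n a := by
  classical
  simpa [Finset.sum_image, Finset.card_image_of_injective, neg_injective, sub_eq_add_neg]
    using hn.sum_shift (D.image Neg.neg) a

theorem discreteConv_le (hn : ShiftBoundedNorm n K) (h a : ι → ℝ≥0∞) :
    n (discreteConv h a) ≤ K * (∑' l, h l) * n a := by
  have conv_eq : discreteConv h a = fun j => ∑' l, h l * a (j + -l) := by
    ext j
    rw [discreteConv, ← (Equiv.subLeft j).tsum_eq]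
    simp [sub_eq_add_neg]
  calc n (discreteConv h a) ≤ ∑' l, n (fun j => h l * a (j + -l)) := by
        rw [conv_eq]
        exact hn.tsum fun l j => h l * a (j + -l)
    _ ≤ ∑' l, h l * (K * n a) := by
        gcongr with l
        exact (hn.const_mul _ _).trans (by gcongr; exact hn.shift a (-l))
    _ = K * (∑' l, h l) * n a := by rw [ENNReal.tsum_mul_right]; ring

protected theorem ellNorm (p : ℝ≥0∞) [Fact (1 ≤ p)] :
    ShiftBoundedNorm (ellNorm p : (ι → ℝ≥0∞) → ℝ≥0∞) 1 where
  mono := ellNorm_mono p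
  const_mul c a := (ellNorm_const_mul c a).le
  tsum := ellNorm_tsum_le
  shift a l := by
    rw [one_mul]
    exact (ellNorm_comp_equiv p (Equiv.addRight l) a).le

protected theorem iSup {τ : Type*} {n : τ → (ι → ℝ≥0∞) → ℝ≥0∞}
    (hn : ∀ t, ShiftBoundedNorm (n t) K) : ShiftBoundedNorm (fun a => ⨆ t, n t a) K where
  mono h := iSup_mono fun t => (hn t).mono h
  const_mul c a := by
    rw [ENNReal.mul_iSup]
    exact iSup_mono fun t => (hn t).const_mul c a
  tsum f := iSup_le fun t => ((hn t).tsum f).trans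
    (ENNReal.tsum_le_tsum fun i => le_iSup (fun t => n t (f i)) t)
  shift a l := by
    rw [ENNReal.mul_iSup]
    exact iSup_mono fun t => (hn t).shift a l

protected theorem max {n₁ n₂ : (ι → ℝ≥0∞) → ℝ≥0∞} (h₁ : ShiftBoundedNorm n₁ K)
    (h₂ : ShiftBoundedNorm n₂ K) : ShiftBoundedNorm (fun a => max (n₁ a) (n₂ a)) K := by
  convert ShiftBoundedNorm.iSup (n := fun t : Bool => if t then n₁ else n₂) (K := K)
    (by rintro (_ | _) <;> simpa) using 2 with a
  simp [iSup_bool_eq]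

theorem mul_left (hn : ShiftBoundedNorm n K) (c : ℝ≥0∞) :
    ShiftBoundedNorm (fun a => c * n a) K where
  mono h := by
    gcongr
    exact hn.mono h
  const_mul e a := by
    rw [mul_left_comm]
    gcongr
    exact hn.const_mul e a
  tsum f := by
    rw [ENNReal.tsum_mul_left]
    gcongr
    exact hn.tsum f
  shift a l := by
    rw [mul_left_comm]
    gcongr
    exact hn.shift a l

protected theorem windowNorm (q : ℝ≥0∞) [Fact (1 ≤ q)] (S : Set ι) :
    ShiftBoundedNorm (windowNorm q S : (ι → ℝ≥0∞) → ℝ≥0∞) 1 where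
  mono h := iSup_mono fun z => ellNorm_indicator_mono q _ h
  const_mul c a := by
    simp_rw [windowNorm, ellNorm_indicator_const_mul, ENNReal.mul_iSup, le_rfl]
  tsum f := iSup_le fun z => (ellNorm_indicator_tsum_le _ f).trans
    (ENNReal.tsum_le_tsum fun i => le_iSup (fun z => ellNorm q ({k | k - z ∈ S}.indicator (f i))) z)
  shift a l := by
    rw [one_mul]
    refine iSup_le fun z => le_iSup_of_le (z + l) ?_
    refine (ellNorm_mono q fun k => ?_).trans (ellNorm_comp_equiv q (Equiv.addRight l) _).le
    by_cases hk : k - z ∈ S <;> simp [hk]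

end ShiftBoundedNorm

variable (q : ℝ≥0∞)

theorem windowNorm_le_ellNorm (S : Set ι) (a : ι → ℝ≥0∞) : windowNorm q S a ≤ ellNorm q a :=
  iSup_le fun _ => ellNorm_indicator_le q fun _ _ => le_rfl

theorem ellNorm_indicator_le_windowNorm (S : Set ι) (a : ι → ℝ≥0∞) :
    ellNorm q (S.indicator a) ≤ windowNorm q S a :=
  le_iSup_of_le 0 (by simp)

theorem ellNorm_top_le_windowNorm [Fact (1 ≤ q)] {S : Set ι} (hS : 0 ∈ S) (a : ι → ℝ≥0∞) :
    ellNorm ∞ a ≤ windowNorm q S a := by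
  rw [ellNorm_top]
  exact iSup_le fun k => le_iSup_of_le k (le_ellNorm_indicator q a (by simpa using hS))

theorem windowNorm_singleton_le [Fact (1 ≤ q)] (x : ι) (a : ι → ℝ≥0∞) :
    windowNorm q {x} a ≤ ellNorm ∞ a := by
  refine iSup_le fun z => (ellNorm_le_tsum _).trans ?_
  rw [tsum_eq_single (x + z) fun k hk => Set.indicator_of_notMem ?_ a]
  · exact (Set.indicator_le_self _ a _).trans (le_ellNorm ∞ a _)
  · simpa [sub_eq_iff_eq_add] using hk

theorem windowNorm_mono {S S' : Set ι} (h : S ⊆ S') (a : ι → ℝ≥0∞) :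
    windowNorm q S a ≤ windowNorm q S' a :=
  iSup_mono fun _ => ellNorm_mono q
    (Set.indicator_le_indicator_of_subset (fun _ hk => h hk) fun _ => zero_le)

theorem windowNorm_insert_le [Fact (1 ≤ q)] {S : Set ι} (hS : 0 ∈ S) (x : ι) (a : ι → ℝ≥0∞) :
    windowNorm q (insert x S) a ≤ 2 * windowNorm q S a := by
  suffices windowNorm q (insert x S) a ≤ windowNorm q {x} a + windowNorm q S a by
    rw [two_mul]
    exact this.trans (add_le_add_left ((windowNorm_singleton_le q x a).trans
      (ellNorm_top_le_windowNorm q hS a)) _)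
  refine iSup_le fun z => le_trans ?_ (add_le_add
    (le_iSup (fun z => ellNorm q ({k | k - z ∈ ({x} : Set ι)}.indicator a)) z)
    (le_iSup (fun z => ellNorm q ({k | k - z ∈ S}.indicator a)) z))
  refine le_trans (ellNorm_mono q fun k => ?_) (ellNorm_add_le _ _)
  by_cases h₁ : k - z = x <;> by_cases h₂ : k - z ∈ S <;> simp [h₁, h₂]

end ShiftBoundedNorm

/-! ### Matrices of operators with off-diagonal decay -/

section Bounded

variable {ι κ F : Type*} [NormedAddCommGroup F]

/-- Boundedness of a family of vectors. -/
def BddFamily (x : ι → F) : Prop := ellNorm ∞ (fun k => ‖x k‖ₑ) ≠ ∞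

namespace BddFamily

variable {x y : ι → F}

theorem of_le {M : ℝ≥0∞} (hM : M ≠ ∞) (h : ∀ k, ‖x k‖ₑ ≤ M) : BddFamily x :=
  ne_top_of_le_ne_top hM ((ellNorm_top _).trans_le (iSup_le h))

theorem of_ellNorm {p : ℝ≥0∞} [Fact (1 ≤ p)] (h : ellNorm p (fun k => ‖x k‖ₑ) ≠ ∞) :
    BddFamily x :=
  ne_top_of_le_ne_top h (ellNorm_top_le _)

theorem mono (hy : BddFamily y) (h : ∀ k, ‖x k‖ₑ ≤ ‖y k‖ₑ) : BddFamily x :=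
  ne_top_of_le_ne_top hy (ellNorm_mono ∞ h)

theorem add (hx : BddFamily x) (hy : BddFamily y) : BddFamily (x + y) :=
  ne_top_of_le_ne_top (ENNReal.add_ne_top.2 ⟨hx, hy⟩)
    ((ellNorm_mono ∞ fun _ => enorm_add_le _ _).trans (ellNorm_add_le _ _))

theorem sum {s : Finset κ} {x : κ → ι → F} (hx : ∀ i ∈ s, BddFamily (x i)) :
    BddFamily (∑ i ∈ s, x i) :=
  Finset.sum_induction x BddFamily (fun _ _ => add) (of_le zero_ne_top (by simp)) hx

end BddFamily

end Bounded

section matrixOp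

variable {ι F E : Type*} [NormedAddCommGroup F] [NormedSpace ℝ F] [NormedAddCommGroup E]
  [NormedSpace ℝ E] {B : ι → ι → F →L[ℝ] E} {n n' : (ι → ℝ≥0∞) → ℝ≥0∞} {κ : ℝ≥0∞}

/-- The action of a matrix `B` of operators on a family of vectors. -/
noncomputable def matrixOp (B : ι → ι → F →L[ℝ] E) (x : ι → F) (j : ι) : E :=
  ∑' k, B j k (x k)

/-- Uniform solvability of `B s = B x`: every `x` of finite norm can be replaced by some `s` having
the same image under `B`, with norm at most `κ` times the norm of the image. -/
def HasBoundedSolutions (B : ι → ι → F →L[ℝ] E) (n : (ι → ℝ≥0∞) → ℝ≥0∞) (κ : ℝ≥0∞) : Prop :=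
  ∀ x : ι → F, n (fun k => ‖x k‖ₑ) ≠ ∞ → ∃ s : ι → F, matrixOp B s = matrixOp B x ∧
    n (fun k => ‖s k‖ₑ) ≤ κ * n (fun j => ‖matrixOp B x j‖ₑ)

theorem HasBoundedSolutions.of_equiv {a b : ℝ≥0∞} (hb : b ≠ ∞) (h : HasBoundedSolutions B n κ)
    (h₁ : ∀ u, n u ≤ b * n' u) (h₂ : ∀ u, n' u ≤ a * n u) :
    HasBoundedSolutions B n' (a * b * κ) := by
  intro x hx
  obtain ⟨s, hs, hsn⟩ := h x (ne_top_of_le_ne_top (ENNReal.mul_ne_top hb hx) (h₁ _))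
  refine ⟨s, hs, ?_⟩
  calc n' (fun k => ‖s k‖ₑ) ≤ a * n (fun k => ‖s k‖ₑ) := h₂ _
    _ ≤ a * (κ * (b * n' fun j => ‖matrixOp B x j‖ₑ)) := by
        gcongr
        exact hsn.trans (by gcongr; exact h₁ _)
    _ = a * b * κ * n' fun j => ‖matrixOp B x j‖ₑ := by ring

theorem matrixOp_smul (c : ℝ) (x : ι → F) : matrixOp B (c • x) = c • matrixOp B x := by
  ext j
  simp only [matrixOp, Pi.smul_apply, map_smul]
  exact tsum_const_smul'' c

variable [AddCommGroup ι] {h : ι → ℝ≥0∞}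

/-- Domination of a matrix of operators by convolution with a summable sequence. -/
structure ConvDominated (B : ι → ι → F →L[ℝ] E) (h : ι → ℝ≥0∞) : Prop where
  enorm_le : ∀ j k v, ‖B j k v‖ₑ ≤ h (j - k) * ‖v‖ₑ
  tsum_ne_top : ∑' l, h l ≠ ∞

namespace ConvDominated

theorem enorm_matrixOp_le (hB : ConvDominated B h) (x : ι → F) (j : ι) :
    ‖matrixOp B x j‖ₑ ≤ discreteConv h (fun k => ‖x k‖ₑ) j :=
  enorm_tsum_le_tsum_enorm.trans (ENNReal.tsum_le_tsum fun k => hB.enorm_le j k (x k))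

variable {x y : ι → F}

theorem tsum_enorm_ne_top (hB : ConvDominated B h) (hx : BddFamily x) (j : ι) :
    ∑' k, ‖B j k (x k)‖ₑ ≠ ∞ := by
  refine ne_top_of_le_ne_top (ENNReal.mul_ne_top hB.tsum_ne_top hx) ?_
  rw [← (Equiv.subLeft j).tsum_eq h, ← ENNReal.tsum_mul_right]
  refine ENNReal.tsum_le_tsum fun k => (hB.enorm_le j k (x k)).trans ?_
  rw [Equiv.subLeft_apply]
  gcongr
  exact le_ellNorm ∞ (fun k => ‖x k‖ₑ) k

variable [CompleteSpace E]

theorem summable (hB : ConvDominated B h) (hx : BddFamily x) (j : ι) :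
    Summable fun k => B j k (x k) :=
  .of_enorm (hB.tsum_enorm_ne_top hx j)

theorem matrixOp_add (hB : ConvDominated B h) (hx : BddFamily x) (hy : BddFamily y) :
    matrixOp B (x + y) = matrixOp B x + matrixOp B y := by
  ext j
  simp only [matrixOp, Pi.add_apply, map_add]
  exact (hB.summable hx j).tsum_add (hB.summable hy j)

theorem matrixOp_sub (hB : ConvDominated B h) (hx : BddFamily x) (hy : BddFamily y) :
    matrixOp B (x - y) = matrixOp B x - matrixOp B y := by
  ext j
  simp only [matrixOp, Pi.sub_apply, map_sub]
  exact (hB.summable hx j).tsum_sub (hB.summable hy j)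

theorem matrixOp_sum {τ : Type*} (hB : ConvDominated B h) (s : Finset τ) {x : τ → ι → F}
    (hx : ∀ i, BddFamily (x i)) :
    matrixOp B (∑ i ∈ s, x i) = ∑ i ∈ s, matrixOp B (x i) := by
  ext j
  simp only [matrixOp, Finset.sum_apply, map_sum]
  exact Summable.tsum_finsetSum fun i _ => hB.summable (hx i) j

end ConvDominated

theorem ConvDominated.norm_matrixOp_le {ι : Type u} [AddCommGroup ι] {B : ι → ι → F →L[ℝ] E}
    {h : ι → ℝ≥0∞} {n : (ι → ℝ≥0∞) → ℝ≥0∞} {K : ℝ≥0∞} (hB : ConvDominated B h)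
    (hn : ShiftBoundedNorm n K) (x : ι → F) :
    n (fun j => ‖matrixOp B x j‖ₑ) ≤ K * (∑' l, h l) * n (fun k => ‖x k‖ₑ) :=
  (hn.mono (hB.enorm_matrixOp_le x)).trans (hn.discreteConv_le h _)

theorem ConvDominated.ellNorm_matrixOp_le {ι : Type u} [AddCommGroup ι] {B : ι → ι → F →L[ℝ] E}
    {h : ι → ℝ≥0∞} {p : ℝ≥0∞} [Fact (1 ≤ p)] (hB : ConvDominated B h) (x : ι → F) :
    ellNorm p (fun j => ‖matrixOp B x j‖ₑ) ≤ (∑' l, h l) * ellNorm p fun k => ‖x k‖ₑ := by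
  simpa using hB.norm_matrixOp_le (.ellNorm p) x

theorem ConvDominated.ellNorm_matrixOp_ne_top {ι : Type u} [AddCommGroup ι]
    {B : ι → ι → F →L[ℝ] E} {h : ι → ℝ≥0∞} {p : ℝ≥0∞} [Fact (1 ≤ p)] (hB : ConvDominated B h)
    {x : ι → F} (hx : ellNorm p (fun k => ‖x k‖ₑ) ≠ ∞) :
    ellNorm p (fun j => ‖matrixOp B x j‖ₑ) ≠ ∞ :=
  ne_top_of_le_ne_top (ENNReal.mul_ne_top hB.tsum_ne_top hx) (hB.ellNorm_matrixOp_le x)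

theorem enorm_smul_le_of_mem_Icc {t : ℝ} (ht : t ∈ Set.Icc (0 : ℝ) 1) (v : F) :
    ‖t • v‖ₑ ≤ ‖v‖ₑ := by
  rw [enorm_smul, Real.enorm_of_nonneg ht.1]
  exact mul_le_of_le_one_left zero_le (ENNReal.ofReal_le_one.2 ht.2)

theorem ConvDominated.enorm_matrixOp_smul_le [CompleteSpace E] (hB : ConvDominated B h) {x : ι → F}
    (hx : BddFamily x) {χ : ι → ℝ} (hχ : ∀ k, χ k ∈ Set.Icc (0 : ℝ) 1) (j : ι) :
    ‖matrixOp B (χ • x) j‖ₑ ≤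
      ‖χ j‖ₑ * ‖matrixOp B x j‖ₑ + ∑' k, h (j - k) * (‖χ k - χ j‖ₑ * ‖x k‖ₑ) := by
  have hχx : BddFamily (χ • x) := hx.mono fun k => enorm_smul_le_of_mem_Icc (hχ k) (x k)
  have hχjx : BddFamily (χ j • x) := hx.mono fun k => enorm_smul_le_of_mem_Icc (hχ j) (x k)
  have commutator :
      matrixOp B (χ • x) j = χ j • matrixOp B x j + matrixOp B (χ • x - χ j • x) j := by
    rw [hB.matrixOp_sub hχx hχjx, matrixOp_smul, Pi.sub_apply, Pi.smul_apply, add_sub_cancel]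
  rw [commutator]
  refine (enorm_add_le _ _).trans (add_le_add (enorm_smul _ _).le ?_)
  refine (hB.enorm_matrixOp_le _ j).trans_eq (tsum_congr fun k => ?_)
  rw [← enorm_smul, sub_smul]
  rfl

end matrixOp

/-! ### Partitions of unity subordinate to blocks -/

/-- A partition of the index group into blocks labelled by the group itself, together with a
partition of unity `ψ` and plateau functions `θ` living on neighbourhoods of the blocks. -/
structure Cutoff (ι : Type*) [AddCommGroup ι] where
  /-- the label of the block of an index -/
  blk : ι → ι
  /-- the offsets of neighbouring blocks -/
  D : Finset ι
  /-- the partition of unity -/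
  ψ : ι → ι → ℝ
  /-- the plateau functions -/
  θ : ι → ι → ℝ
  /-- the modulus of continuity of `ψ` and `θ` -/
  ρ : ι → ℝ≥0∞
  blk_add : ∀ k l, blk (k + l) - blk k - blk l ∈ D
  ψ_mem : ∀ m k, ψ m k ∈ Set.Icc (0 : ℝ) 1
  θ_mem : ∀ m k, θ m k ∈ Set.Icc (0 : ℝ) 1
  ψ_supp : ∀ m k, ψ m k ≠ 0 → m - blk k ∈ D
  θ_supp : ∀ m k, θ m k ≠ 0 → m - blk k ∈ D
  ψ_sum : ∀ k, ∑ δ ∈ D, ψ (blk k + δ) k = 1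
  θ_eq_one : ∀ m k, ψ m k ≠ 0 → θ m k = 1
  ψ_lip : ∀ m j k, ‖ψ m k - ψ m j‖ₑ ≤ ρ (j - k)
  θ_lip : ∀ m j k, ‖θ m k - θ m j‖ₑ ≤ ρ (j - k)

namespace Cutoff

variable {ι : Type u} [AddCommGroup ι] (χ : Cutoff ι) {n : (ι → ℝ≥0∞) → ℝ≥0∞} {p : ℝ≥0∞}

/-- The amalgam of the local `ℓ^p` norm on blocks and the global norm `n`. -/
noncomputable def amalgam (p : ℝ≥0∞) (n : (ι → ℝ≥0∞) → ℝ≥0∞) (a : ι → ℝ≥0∞) : ℝ≥0∞ :=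
  n (fiberNorm p χ.blk a)

/-- The labels of the blocks neighbouring the block of an index. -/
def nbLabels (k : ι) : Finset ι := χ.D.map (addLeftEmbedding (χ.blk k))

/-- The neighbourhood of the block labelled `m`. -/
def nhd (m : ι) : Set ι := {k | m ∈ χ.nbLabels k}

/-- A bound for the commutators of the cutoffs with matrices dominated by `h`. -/
noncomputable def commBound (h : ι → ℝ≥0∞) : ℝ≥0∞ :=
  (χ.D.card + χ.D.card ^ 2) * ∑' l, h l * χ.ρ l

/-- The superposition of local families by means of the plateau functions. -/
noncomputable def glue {F : Type*} [AddCommGroup F] [Module ℝ F] (v : ι → ι → F) (k : ι) : F :=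
  ∑ m ∈ χ.nbLabels k, χ.θ m k • v m k

theorem mem_nbLabels {m k : ι} : m ∈ χ.nbLabels k ↔ m - χ.blk k ∈ χ.D := by
  simp [nbLabels, ← eq_sub_iff_add_eq']

theorem sum_nbLabels {M : Type*} [AddCommMonoid M] (f : ι → M) (k : ι) :
    ∑ m ∈ χ.nbLabels k, f m = ∑ δ ∈ χ.D, f (χ.blk k + δ) := by
  simp [nbLabels]

theorem ψ_eq_zero {m k : ι} (hk : k ∉ χ.nhd m) : χ.ψ m k = 0 := by
  by_contra h
  exact hk (χ.mem_nbLabels.2 (χ.ψ_supp m k h))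

theorem θ_eq_zero {m k : ι} (hk : k ∉ χ.nhd m) : χ.θ m k = 0 := by
  by_contra h
  exact hk (χ.mem_nbLabels.2 (χ.θ_supp m k h))

theorem ellNorm_indicator_nhd_le [Fact (1 ≤ p)] (a : ι → ℝ≥0∞) (m : ι) :
    ellNorm p ((χ.nhd m).indicator a) ≤ ∑ δ ∈ χ.D, fiberNorm p χ.blk a (m - δ) := by
  refine (ellNorm_indicator_le p fun k hk => ?_).trans (ellNorm_sum_le χ.D
    fun δ => (χ.blk ⁻¹' {m - δ}).indicator a)
  refine le_trans ?_ (Finset.single_le_sum (f := fun δ => (χ.blk ⁻¹' {m - δ}).indicator a k)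
    (fun _ _ => zero_le) (χ.mem_nbLabels.1 hk))
  simp

theorem fiberNorm_sum_nbLabels_le [Fact (1 ≤ p)] (f : ι → ι → ℝ≥0∞) (m : ι) :
    fiberNorm p χ.blk (fun k => ∑ i ∈ χ.nbLabels k, f i k) m ≤
      ∑ δ ∈ χ.D, ellNorm p (f (m + δ)) := by
  refine le_trans (ellNorm_indicator_le p fun k hk => ?_) (ellNorm_sum_le χ.D fun δ => f (m + δ))
  rw [χ.sum_nbLabels, show χ.blk k = m from hk]

theorem norm_ellNorm_nhd_le [Fact (1 ≤ p)] (hn : ShiftBoundedNorm n 1) (a : ι → ℝ≥0∞) :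
    n (fun m => ellNorm p ((χ.nhd m).indicator a)) ≤ χ.D.card * χ.amalgam p n a := by
  simpa [amalgam] using (hn.mono (χ.ellNorm_indicator_nhd_le a)).trans (hn.sum_shift_sub χ.D _)

theorem amalgam_sum_nbLabels_le [Fact (1 ≤ p)] (hn : ShiftBoundedNorm n 1)
    (f : ι → ι → ℝ≥0∞) :
    χ.amalgam p n (fun k => ∑ i ∈ χ.nbLabels k, f i k) ≤
      χ.D.card * n (fun m => ellNorm p (f m)) := by
  simpa [amalgam] using (hn.mono (χ.fiberNorm_sum_nbLabels_le f)).trans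
    (hn.sum_shift χ.D fun m => ellNorm p (f m))

theorem fiberNorm_shift_le [Fact (1 ≤ p)] (a : ι → ℝ≥0∞) (l m : ι) :
    fiberNorm p χ.blk (fun j => a (j + l)) m ≤
      ∑ δ ∈ χ.D, fiberNorm p χ.blk a (m + (χ.blk l + δ)) := by
  have shifted : ∀ δ, fiberNorm p χ.blk a (m + (χ.blk l + δ)) =
      ellNorm p (fun k => (χ.blk ⁻¹' {m + (χ.blk l + δ)}).indicator a (k + l)) := fun δ =>
    (ellNorm_comp_equiv p (Equiv.addRight l) _).symm
  simp_rw [shifted]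
  refine le_trans (ellNorm_indicator_le p fun k hk => ?_) (ellNorm_sum_le χ.D _)
  refine le_trans ?_ (Finset.single_le_sum
    (f := fun δ => (χ.blk ⁻¹' {m + (χ.blk l + δ)}).indicator a (k + l))
    (fun _ _ => zero_le) (χ.blk_add k l))
  rw [Set.indicator_of_mem]
  rw [Set.mem_preimage, Set.mem_singleton_iff, ← show χ.blk k = m from hk]
  abel

theorem shiftBoundedNorm_amalgam [Fact (1 ≤ p)] (hn : ShiftBoundedNorm n 1) :
    ShiftBoundedNorm (χ.amalgam p n) χ.D.card where
  mono h := hn.mono fun _ => ellNorm_indicator_mono p _ h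
  const_mul c a := (hn.mono fun _ => (ellNorm_indicator_const_mul _ c a).le).trans
    (hn.const_mul c _)
  tsum f := (hn.mono fun _ => ellNorm_indicator_tsum_le _ f).trans (hn.tsum _)
  shift a l := by
    have block_shift : ∀ δ ∈ χ.D, n (fun m => fiberNorm p χ.blk a (m + (χ.blk l + δ))) ≤
        χ.amalgam p n a := fun δ _ => (hn.shift _ _).trans_eq (one_mul _)
    exact (hn.mono (χ.fiberNorm_shift_le a l)).trans ((hn.sum _ _).trans
      ((Finset.sum_le_card_nsmul _ _ _ block_shift).trans_eq (nsmul_eq_mul _ _)))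

theorem ellNorm_top_le_amalgam [Fact (1 ≤ p)] (hn : ∀ a, ellNorm ∞ a ≤ n a) (a : ι → ℝ≥0∞) :
    ellNorm ∞ a ≤ χ.amalgam p n a := by
  rw [← ellNorm_fiberNorm χ.blk a]
  exact (ellNorm_mono ∞ fun m => ellNorm_top_le _).trans (hn _)

section glue

variable {F : Type*} [NormedAddCommGroup F] [NormedSpace ℝ F]

theorem enorm_ψ_smul_le (m : ι) (x : ι → F) (k : ι) :
    ‖(χ.ψ m • x) k‖ₑ ≤ (χ.nhd m).indicator (fun k => ‖x k‖ₑ) k := by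
  by_cases hk : k ∈ χ.nhd m
  · simpa [hk] using enorm_smul_le_of_mem_Icc (χ.ψ_mem m k) (x k)
  · simp [χ.ψ_eq_zero hk]

theorem enorm_glue_le (v : ι → ι → F) (k : ι) :
    ‖χ.glue v k‖ₑ ≤ ∑ m ∈ χ.nbLabels k, ‖v m k‖ₑ :=
  (enorm_sum_le _ _).trans (Finset.sum_le_sum fun m _ => enorm_smul_le_of_mem_Icc (χ.θ_mem m k) _)

theorem amalgam_glue_le [Fact (1 ≤ p)] (hn : ShiftBoundedNorm n 1) (v : ι → ι → F) :
    χ.amalgam p n (fun k => ‖χ.glue v k‖ₑ) ≤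
      χ.D.card * n (fun m => ellNorm p fun k => ‖v m k‖ₑ) :=
  ((χ.shiftBoundedNorm_amalgam hn).mono (χ.enorm_glue_le v)).trans
    (χ.amalgam_sum_nbLabels_le hn _)

theorem glue_sub (v w : ι → ι → F) : χ.glue (v - w) = χ.glue v - χ.glue w := by
  ext k
  simp [glue, smul_sub]

theorem glue_ψ_smul (x : ι → F) : χ.glue (fun m => χ.ψ m • x) = x := by
  ext k
  have absorb : ∀ m, χ.θ m k • χ.ψ m k • x k = χ.ψ m k • x k := fun m => by
    by_cases h : χ.ψ m k = 0
    · simp [h]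
    · rw [χ.θ_eq_one m k h, one_smul]
  simp only [glue, Pi.smul_apply', absorb]
  rw [← Finset.sum_smul, χ.sum_nbLabels fun m => χ.ψ m k, χ.ψ_sum, one_smul]

theorem enorm_glue_sub_le (v : ι → ι → F) (j k : ι) :
    ‖χ.glue v k - ∑ m ∈ χ.nbLabels j, χ.θ m j • v m k‖ₑ ≤
      χ.ρ (j - k) * (∑ m ∈ χ.nbLabels k, ‖v m k‖ₑ + ∑ m ∈ χ.nbLabels j, ‖v m k‖ₑ) := by
  classical
  have enlarge : ∀ i, χ.nbLabels i ⊆ χ.nbLabels k ∪ χ.nbLabels j →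
      ∑ m ∈ χ.nbLabels i, χ.θ m i • v m k =
        ∑ m ∈ χ.nbLabels k ∪ χ.nbLabels j, χ.θ m i • v m k := fun i hi =>
    Finset.sum_subset hi fun m _ hm => by rw [χ.θ_eq_zero hm, zero_smul]
  rw [glue, enlarge k Finset.subset_union_left, enlarge j Finset.subset_union_right,
    ← Finset.sum_sub_distrib]
  calc ‖∑ m ∈ χ.nbLabels k ∪ χ.nbLabels j, (χ.θ m k • v m k - χ.θ m j • v m k)‖ₑ
      ≤ ∑ m ∈ χ.nbLabels k ∪ χ.nbLabels j, χ.ρ (j - k) * ‖v m k‖ₑ := by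
        refine (enorm_sum_le _ _).trans (Finset.sum_le_sum fun m _ => ?_)
        rw [← sub_smul, enorm_smul]
        gcongr
        exact χ.θ_lip m j k
    _ ≤ χ.ρ (j - k) * (∑ m ∈ χ.nbLabels k, ‖v m k‖ₑ + ∑ m ∈ χ.nbLabels j, ‖v m k‖ₑ) := by
        rw [← Finset.mul_sum, ← Finset.sum_union_inter]
        gcongr
        exact le_self_add

end glue

end Cutoff

section bootstrap

variable {ι : Type u} [AddCommGroup ι] {F E : Type*} [NormedAddCommGroup F] [NormedSpace ℝ F]
  [NormedAddCommGroup E] [NormedSpace ℝ E] [CompleteSpace E] {B : ι → ι → F →L[ℝ] E}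
  {h : ι → ℝ≥0∞} {n : (ι → ℝ≥0∞) → ℝ≥0∞} {p : ℝ≥0∞} [Fact (1 ≤ p)]

theorem enorm_matrixOp_ψ_smul_le (χ : Cutoff ι) (hB : ConvDominated B h) {x : ι → F}
    (hx : BddFamily x) (m j : ι) :
    ‖matrixOp B (χ.ψ m • x) j‖ₑ ≤
      (χ.nhd m).indicator (fun j => ‖matrixOp B x j‖ₑ +
        discreteConv (fun l => h l * χ.ρ l) (fun k => ‖x k‖ₑ) j) j +
      discreteConv (fun l => h l * χ.ρ l) ((χ.nhd m).indicator fun k => ‖x k‖ₑ) j := by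
  refine (hB.enorm_matrixOp_smul_le hx (χ.ψ_mem m) j).trans ?_
  by_cases hj : j ∈ χ.nhd m
  · rw [Set.indicator_of_mem hj]
    refine le_add_right (add_le_add ?_ (ENNReal.tsum_le_tsum fun k => ?_))
    · rw [← enorm_smul]
      exact enorm_smul_le_of_mem_Icc (χ.ψ_mem m j) _
    · rw [mul_assoc]
      gcongr
      exact χ.ψ_lip m j k
  · rw [χ.ψ_eq_zero hj, enorm_zero, zero_mul, zero_add]
    refine le_add_left (ENNReal.tsum_le_tsum fun k => ?_)
    by_cases hk : k ∈ χ.nhd m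
    · rw [Set.indicator_of_mem hk, mul_assoc, ← χ.ψ_eq_zero hj]
      gcongr
      exact χ.ψ_lip m j k
    · simp [χ.ψ_eq_zero hk]

theorem norm_matrixOp_ψ_smul_le (χ : Cutoff ι) (hn : ShiftBoundedNorm n 1)
    (hB : ConvDominated B h) {x : ι → F} (hx : BddFamily x) :
    n (fun m => ellNorm p fun j => ‖matrixOp B (χ.ψ m • x) j‖ₑ) ≤
      χ.D.card * χ.amalgam p n (fun j => ‖matrixOp B x j‖ₑ) +
        χ.commBound h * χ.amalgam p n (fun k => ‖x k‖ₑ) := by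
  set hρ : ι → ℝ≥0∞ := fun l => h l * χ.ρ l
  set a : ι → ℝ≥0∞ := fun k => ‖x k‖ₑ
  set b : ι → ℝ≥0∞ := fun j => ‖matrixOp B x j‖ₑ
  have hG := χ.shiftBoundedNorm_amalgam (p := p) hn
  have local_bound : ∀ m, ellNorm p (fun j => ‖matrixOp B (χ.ψ m • x) j‖ₑ) ≤
      ellNorm p ((χ.nhd m).indicator fun j => b j + discreteConv hρ a j) +
        (∑' l, hρ l) * ellNorm p ((χ.nhd m).indicator a) := fun m => by
    refine (ellNorm_mono p (enorm_matrixOp_ψ_smul_le χ hB hx m)).trans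
      ((ellNorm_add_le _ _).trans (add_le_add le_rfl ?_))
    simpa using (ShiftBoundedNorm.ellNorm p).discreteConv_le hρ ((χ.nhd m).indicator a)
  calc n (fun m => ellNorm p fun j => ‖matrixOp B (χ.ψ m • x) j‖ₑ)
      ≤ n (fun m => ellNorm p ((χ.nhd m).indicator fun j => b j + discreteConv hρ a j)) +
        (∑' l, hρ l) * n (fun m => ellNorm p ((χ.nhd m).indicator a)) :=
        (hn.mono local_bound).trans ((hn.add _ _).trans (add_le_add le_rfl (hn.const_mul _ _)))
    _ ≤ χ.D.card * χ.amalgam p n (fun j => b j + discreteConv hρ a j) +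
        (∑' l, hρ l) * (χ.D.card * χ.amalgam p n a) := by
        gcongr <;> exact χ.norm_ellNorm_nhd_le hn _
    _ ≤ χ.D.card * (χ.amalgam p n b + χ.D.card * (∑' l, hρ l) * χ.amalgam p n a) +
        (∑' l, hρ l) * (χ.D.card * χ.amalgam p n a) := by
        gcongr
        exact (hG.add _ _).trans (add_le_add le_rfl (hG.discreteConv_le _ _))
    _ = χ.D.card * χ.amalgam p n b + χ.commBound h * χ.amalgam p n a := by
        rw [Cutoff.commBound]
        ring

theorem enorm_matrixOp_glue_le (χ : Cutoff ι) (hB : ConvDominated B h) {v : ι → ι → F}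
    (hv : ∀ m, BddFamily (v m)) (hglue : BddFamily (χ.glue v)) (hker : ∀ m, matrixOp B (v m) = 0)
    (j : ι) :
    ‖matrixOp B (χ.glue v) j‖ₑ ≤
      discreteConv (fun l => h l * χ.ρ l) (fun k => ∑ m ∈ χ.nbLabels k, ‖v m k‖ₑ) j +
        ∑ m ∈ χ.nbLabels j, discreteConv (fun l => h l * χ.ρ l) (fun k => ‖v m k‖ₑ) j := by
  have hθv : ∀ m, BddFamily (χ.θ m j • v m) := fun m =>
    (hv m).mono fun k => enorm_smul_le_of_mem_Icc (χ.θ_mem m j) _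
  have freeze : matrixOp B (χ.glue v) =
      matrixOp B (χ.glue v - ∑ m ∈ χ.nbLabels j, χ.θ m j • v m) := by
    rw [hB.matrixOp_sub hglue (BddFamily.sum fun m _ => hθv m), hB.matrixOp_sum _ hθv]
    simp [matrixOp_smul, hker]
  rw [freeze]
  refine (hB.enorm_matrixOp_le _ j).trans ?_
  unfold discreteConv
  rw [← Summable.tsum_finsetSum fun _ _ => ENNReal.summable, ← ENNReal.tsum_add]
  refine ENNReal.tsum_le_tsum fun k => ?_
  rw [← Finset.mul_sum, ← mul_add, mul_assoc]
  gcongr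
  simpa using χ.enorm_glue_sub_le v j k

theorem amalgam_matrixOp_glue_le (χ : Cutoff ι) (hn : ShiftBoundedNorm n 1)
    (hn_top : ∀ a, ellNorm ∞ a ≤ n a) (hB : ConvDominated B h) {v : ι → ι → F}
    (hv : n (fun m => ellNorm p fun k => ‖v m k‖ₑ) ≠ ∞) (hker : ∀ m, matrixOp B (v m) = 0) :
    χ.amalgam p n (fun j => ‖matrixOp B (χ.glue v) j‖ₑ) ≤
      χ.commBound h * n (fun m => ellNorm p fun k => ‖v m k‖ₑ) := by
  set hρ : ι → ℝ≥0∞ := fun l => h l * χ.ρ l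
  set γ : ι → ℝ≥0∞ := fun m => ellNorm p fun k => ‖v m k‖ₑ
  have hG := χ.shiftBoundedNorm_amalgam (p := p) hn
  have hv_bdd : ∀ m, BddFamily (v m) := fun m =>
    .of_ellNorm (ne_top_of_le_ne_top hv ((le_ellNorm ∞ γ m).trans (hn_top γ)))
  have hglue : BddFamily (χ.glue v) := ne_top_of_le_ne_top
    (ENNReal.mul_ne_top (by simp) hv)
    ((χ.ellNorm_top_le_amalgam hn_top _).trans (χ.amalgam_glue_le hn v))
  have conv_le : ∀ m, ellNorm p (discreteConv hρ fun k => ‖v m k‖ₑ) ≤ (∑' l, hρ l) * γ m :=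
    fun m => by simpa using (ShiftBoundedNorm.ellNorm p).discreteConv_le hρ fun k => ‖v m k‖ₑ
  calc χ.amalgam p n (fun j => ‖matrixOp B (χ.glue v) j‖ₑ)
      ≤ χ.amalgam p n (discreteConv hρ fun k => ∑ m ∈ χ.nbLabels k, ‖v m k‖ₑ) +
        χ.amalgam p n (fun j => ∑ m ∈ χ.nbLabels j, discreteConv hρ (fun k => ‖v m k‖ₑ) j) :=
        (hG.mono (enorm_matrixOp_glue_le χ hB hv_bdd hglue hker)).trans (hG.add _ _)
    _ ≤ χ.D.card * (∑' l, hρ l) * (χ.D.card * n γ) + χ.D.card * ((∑' l, hρ l) * n γ) := by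
        refine add_le_add ((hG.discreteConv_le _ _).trans ?_)
          ((χ.amalgam_sum_nbLabels_le hn _).trans ?_)
        · gcongr
          exact χ.amalgam_sum_nbLabels_le hn _
        · gcongr
          exact (hn.mono conv_le).trans (hn.const_mul _ _)
    _ = χ.commBound h * n γ := by
        rw [Cutoff.commBound]
        ring

theorem HasBoundedSolutions.exists_of_approx {K κ : ℝ≥0∞} (hn : ShiftBoundedNorm n K) (hK : K ≠ ∞)
    (hn_top : ∀ a, ellNorm ∞ a ≤ n a) (hB : ConvDominated B h) (hκ : κ ≠ ∞)
    (hQ : HasBoundedSolutions B n κ) {x x' : ι → F} (hx : n (fun k => ‖x k‖ₑ) ≠ ∞)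
    (hx' : n (fun k => ‖x' k‖ₑ) ≠ ∞) :
    ∃ s : ι → F, matrixOp B s = matrixOp B x ∧
      n (fun k => ‖s k‖ₑ) ≤
        n (fun k => ‖x' k‖ₑ) + κ * n (fun j => ‖matrixOp B (x - x') j‖ₑ) := by
  have bdd {z : ι → F} (hz : n (fun k => ‖z k‖ₑ) ≠ ∞) : BddFamily z :=
    ne_top_of_le_ne_top hz (hn_top _)
  have hsub : n (fun k => ‖(x - x') k‖ₑ) ≠ ∞ := ne_top_of_le_ne_top
    (ENNReal.add_ne_top.2 ⟨hx, hx'⟩) ((hn.mono fun k => enorm_sub_le).trans (hn.add _ _))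
  have himage : n (fun j => ‖matrixOp B (x - x') j‖ₑ) ≠ ∞ := ne_top_of_le_ne_top
    (ENNReal.mul_ne_top (ENNReal.mul_ne_top hK hB.tsum_ne_top) hsub) (hB.norm_matrixOp_le hn _)
  obtain ⟨x'', hx''_eq, hx''⟩ := hQ (x - x') hsub
  refine ⟨x' + x'', ?_, (hn.mono fun k => enorm_add_le _ _).trans ((hn.add _ _).trans (by gcongr))⟩
  rw [hB.matrixOp_add (bdd hx') (bdd (ne_top_of_le_ne_top (ENNReal.mul_ne_top hκ himage) hx'')),
    hx''_eq, hB.matrixOp_sub (bdd hx) (bdd hx'), add_sub_cancel]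

/-- Parametrix: the solutions of the equations localized by `ψ` are glued together by `θ`. -/
theorem exists_approx_solution (χ : Cutoff ι) (hn : ShiftBoundedNorm n 1)
    (hn_top : ∀ a, ellNorm ∞ a ≤ n a) (hB : ConvDominated B h) {C X G : ℝ≥0∞} (hC : C ≠ ∞)
    (hP : HasBoundedSolutions B (ellNorm p) C) (hδ : χ.commBound h ≠ ∞)
    {x : ι → F} (hX : χ.amalgam p n (fun k => ‖x k‖ₑ) ≤ X) (hX_top : X ≠ ∞)
    (hG : χ.amalgam p n (fun j => ‖matrixOp B x j‖ₑ) ≤ G) (hG_top : G ≠ ∞) :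
    ∃ x' : ι → F, χ.amalgam p n (fun k => ‖x' k‖ₑ) ≤
      χ.D.card * (C * (χ.D.card * G + χ.commBound h * X)) ∧
      χ.amalgam p n (fun j => ‖matrixOp B (x - x') j‖ₑ) ≤
        χ.commBound h * (χ.D.card * X + C * (χ.D.card * G + χ.commBound h * X)) := by
  set δ : ℝ≥0∞ := χ.commBound h
  have hx : BddFamily x := ne_top_of_le_ne_top hX_top
    ((χ.ellNorm_top_le_amalgam hn_top _).trans hX)
  have hψ : ∀ m, ellNorm p (fun k => ‖(χ.ψ m • x) k‖ₑ) ≤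
      ellNorm p ((χ.nhd m).indicator fun k => ‖x k‖ₑ) := fun m =>
    ellNorm_mono p (χ.enorm_ψ_smul_le m x)
  have hnψ : n (fun m => ellNorm p fun k => ‖(χ.ψ m • x) k‖ₑ) ≤ χ.D.card * X :=
    (hn.mono hψ).trans ((χ.norm_ellNorm_nhd_le hn _).trans (by gcongr))
  have hψ_top : ∀ m, ellNorm p (fun k => ‖(χ.ψ m • x) k‖ₑ) ≠ ∞ := fun m =>
    ne_top_of_le_ne_top (ENNReal.mul_ne_top (by simp) hX_top)
      (((le_ellNorm ∞ _ m).trans (hn_top _)).trans hnψ)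
  choose y hy hy_le using fun m => hP (χ.ψ m • x) (hψ_top m)
  have hny : n (fun m => ellNorm p fun k => ‖y m k‖ₑ) ≤ C * (χ.D.card * G + δ * X) := by
    refine (hn.mono hy_le).trans ((hn.const_mul _ _).trans ?_)
    gcongr
    exact (norm_matrixOp_ψ_smul_le χ hn hB hx).trans (by gcongr)
  have hy_bdd : ∀ m, BddFamily (y m) := fun m =>
    .of_ellNorm (p := p) (ne_top_of_le_ne_top (by finiteness)
      (((le_ellNorm ∞ _ m).trans (hn_top _)).trans hny))
  set v : ι → ι → F := (fun m => χ.ψ m • x) - y with hv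
  have hnv : n (fun m => ellNorm p fun k => ‖v m k‖ₑ) ≤
      χ.D.card * X + C * (χ.D.card * G + δ * X) :=
    (hn.mono fun m => (ellNorm_mono p fun k => enorm_sub_le).trans (ellNorm_add_le _ _)).trans
      ((hn.add _ _).trans (add_le_add hnψ hny))
  have hker : ∀ m, matrixOp B (v m) = 0 := fun m => by
    rw [hv, Pi.sub_apply, hB.matrixOp_sub (.of_ellNorm (hψ_top m)) (hy_bdd m), hy, sub_self]
  refine ⟨χ.glue y, (χ.amalgam_glue_le hn y).trans (by gcongr), ?_⟩
  have residual : x - χ.glue y = χ.glue v := by rw [hv, χ.glue_sub, χ.glue_ψ_smul]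
  rw [residual]
  exact (amalgam_matrixOp_glue_le χ hn hn_top hB
    (ne_top_of_le_ne_top (by finiteness) hnv) hker).trans (by gcongr)

/-- The gain is that the new constant does not depend on `κ`. The a priori bound is used twice, to
control the given solution and to correct the parametrix. -/
theorem HasBoundedSolutions.bootstrap (χ : Cutoff ι) (hn : ShiftBoundedNorm n 1)
    (hn_top : ∀ a, ellNorm ∞ a ≤ n a) (hB : ConvDominated B h) {C κ : ℝ≥0∞} (hC : C ≠ ∞)
    (hκ : κ ≠ ∞) (hP : HasBoundedSolutions B (ellNorm p) C)
    (hQ : HasBoundedSolutions B (χ.amalgam p n) κ)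
    (hδ : (κ + 1) * (χ.commBound h * (χ.D.card * κ + C * (χ.D.card + 1) + 1)) ≤ 1) :
    HasBoundedSolutions B (χ.amalgam p n) (χ.D.card * C * (χ.D.card + 1) + 1) := by
  set D : ℝ≥0∞ := (χ.D.card : ℝ≥0∞)
  set δ : ℝ≥0∞ := χ.commBound h
  have hN := χ.shiftBoundedNorm_amalgam (p := p) hn
  have hδκ : δ * κ ≤ 1 := by
    rw [mul_comm]
    exact (mul_le_mul' le_self_add (le_mul_of_one_le_right' le_add_self)).trans hδ
  have hκδ : κ * (δ * (D * κ + C * (D + 1))) ≤ 1 :=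
    (mul_le_mul' le_self_add (mul_le_mul' le_rfl le_self_add)).trans hδ
  have hδ_top : δ ≠ ∞ := by
    rintro h
    simp [h] at hδ
  intro x₀ hx₀
  obtain ⟨x, hxx₀, hx⟩ := hQ x₀ hx₀
  rw [← hxx₀] at hx ⊢
  set g : ℝ≥0∞ := χ.amalgam p n fun j => ‖matrixOp B x j‖ₑ with hg
  have hg_top : g ≠ ∞ := by
    rw [hg, hxx₀]
    exact ne_top_of_le_ne_top (ENNReal.mul_ne_top (ENNReal.mul_ne_top (by simp) hB.tsum_ne_top) hx₀)
      (hB.norm_matrixOp_le hN x₀)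
  have hκg : κ * g ≠ ∞ := ENNReal.mul_ne_top hκ hg_top
  obtain ⟨x', hx', hres⟩ := exists_approx_solution χ hn hn_top hB hC hP hδ_top hx hκg le_rfl hg_top
  have local_le : D * g + δ * (κ * g) ≤ (D + 1) * g := by
    rw [add_mul, ← mul_assoc δ]
    gcongr
  replace hx' : χ.amalgam p n (fun k => ‖x' k‖ₑ) ≤ D * C * (D + 1) * g :=
    hx'.trans (by rw [mul_assoc, mul_assoc]; gcongr)
  obtain ⟨s, hs_eq, hs⟩ := hQ.exists_of_approx hN (by simp) (χ.ellNorm_top_le_amalgam hn_top) hB hκ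
    (ne_top_of_le_ne_top hκg hx) (ne_top_of_le_ne_top (by finiteness) hx')
  refine ⟨s, hs_eq, hs.trans ?_⟩
  rw [add_mul _ 1 g]
  refine add_le_add hx' ?_
  calc _ ≤ κ * (δ * (D * (κ * g) + C * ((D + 1) * g))) := by
        gcongr
        exact hres.trans (by gcongr)
    _ = κ * (δ * (D * κ + C * (D + 1))) * g := by ring
    _ ≤ 1 * g := by gcongr

end bootstrap

/-! ### Cutoffs on the integer lattice -/

/-- A trapezoidal bump with plateau `[1 - c, c - 1]` and support `[-c, c]`. -/
noncomputable def bump (c t : ℝ) : ℝ := max (min (c - |t|) 1) 0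

theorem bump_mem (c t : ℝ) : bump c t ∈ Set.Icc (0 : ℝ) 1 :=
  ⟨le_max_right _ _, max_le (min_le_right _ _) zero_le_one⟩

theorem abs_bump_sub_le (c s t : ℝ) : |bump c s - bump c t| ≤ |s - t| := by
  calc |bump c s - bump c t| ≤ |min (c - |s|) 1 - min (c - |t|) 1| := abs_max_sub_max_le_abs _ _ _
    _ ≤ max |c - |s| - (c - |t|)| |1 - 1| := abs_min_sub_min_le_max _ _ _ _
    _ = |(|t| - |s|)| := by
        rw [sub_self (1 : ℝ), abs_zero, max_eq_left (abs_nonneg _), _root_.sub_sub_sub_cancel_left]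
    _ ≤ |s - t| := abs_sub_comm t s ▸ abs_abs_sub_abs_le t s

theorem bump_eq_zero {c t : ℝ} (h : c ≤ |t|) : bump c t = 0 :=
  max_eq_right ((min_le_left _ _).trans (sub_nonpos.2 h))

theorem bump_eq_one {c t : ℝ} (h : |t| ≤ c - 1) : bump c t = 1 := by
  rw [bump, min_eq_right (by linarith), max_eq_left zero_le_one]

theorem abs_lt_of_bump_ne_zero {c t : ℝ} (h : bump c t ≠ 0) : |t| < c :=
  lt_of_not_ge fun h' => h (bump_eq_zero h')

theorem sum_bump_one {u : ℝ} (h0 : 0 ≤ u) (h1 : u < 1) :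
    ∑ δ ∈ Finset.Icc (-2 : ℤ) 2, bump 1 (u - δ) = 1 := by
  have vanish : ∀ δ : ℤ, δ ∉ ({0, 1} : Finset ℤ) → bump 1 (u - δ) = 0 := fun δ hδ => by
    simp only [Finset.mem_insert, Finset.mem_singleton] at hδ
    refine bump_eq_zero (le_abs.2 ?_)
    rcases (by omega : δ ≤ -1 ∨ 2 ≤ δ) with h | h
    · have : (δ : ℝ) ≤ -1 := by exact_mod_cast h
      exact .inl (by linarith)
    · have : (2 : ℝ) ≤ δ := by exact_mod_cast h
      exact .inr (by linarith)
  rw [← Finset.sum_subset (s₁ := {0, 1}) (by decide) fun δ _ => vanish δ,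
    Finset.sum_pair zero_ne_one, Int.cast_zero, sub_zero, Int.cast_one, bump, bump,
    abs_of_nonneg h0, abs_of_neg (sub_neg.2 h1), min_eq_left (by linarith),
    min_eq_left (by linarith), max_eq_left (by linarith), max_eq_left (by linarith)]
  ring

theorem abs_prod_sub_prod_le {ι : Type*} (s : Finset ι) {f g : ι → ℝ}
    (hf : ∀ i, f i ∈ Set.Icc (0 : ℝ) 1) (hg : ∀ i, g i ∈ Set.Icc (0 : ℝ) 1) :
    |∏ i ∈ s, f i - ∏ i ∈ s, g i| ≤ ∑ i ∈ s, |f i - g i| := by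
  classical
  induction s using Finset.induction_on with
  | empty => simp
  | insert a s ha ih =>
    rw [Finset.prod_insert ha, Finset.prod_insert ha, Finset.sum_insert ha]
    have h0 : 0 ≤ ∏ i ∈ s, f i := Finset.prod_nonneg fun i _ => (hf i).1
    have h1 : ∏ i ∈ s, f i ≤ 1 := Finset.prod_le_one (fun i _ => (hf i).1) fun i _ => (hf i).2
    calc |f a * ∏ i ∈ s, f i - g a * ∏ i ∈ s, g i|
        = |(f a - g a) * ∏ i ∈ s, f i + g a * (∏ i ∈ s, f i - ∏ i ∈ s, g i)| := by
          congr 1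
          ring
      _ ≤ |f a - g a| * ∏ i ∈ s, f i + g a * |∏ i ∈ s, f i - ∏ i ∈ s, g i| := by
          refine (abs_add_le _ _).trans_eq ?_
          rw [abs_mul, abs_mul, abs_of_nonneg h0, abs_of_nonneg (hg a).1]
      _ ≤ |f a - g a| + ∑ i ∈ s, |f i - g i| := by
          gcongr
          · exact mul_le_of_le_one_right (abs_nonneg _) h1
          · exact (mul_le_of_le_one_left (abs_nonneg _) (hg a).2).trans ih

section lattice

variable {d : ℕ}

/-- The product bump of scale `N` centred at `N n`. -/
noncomputable def bumpProd (c : ℝ) (N : ℕ) (n k : Fin d → ℤ) : ℝ :=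
  ∏ i, bump c ((k i : ℝ) / N - n i)

/-- The modulus of continuity of product bumps of scale `N`. -/
noncomputable def bumpModulus (N : ℕ) (l : Fin d → ℤ) : ℝ≥0∞ :=
  ENNReal.ofReal (min 1 ((∑ i, |(l i : ℝ)|) / N))

/-- The offsets of neighbouring blocks in the lattice. -/
noncomputable def offsets (d : ℕ) : Finset (Fin d → ℤ) :=
  Fintype.piFinset fun _ => Finset.Icc (-2) 2

theorem bumpProd_mem (c : ℝ) (N : ℕ) (n k : Fin d → ℤ) :
    bumpProd c N n k ∈ Set.Icc (0 : ℝ) 1 :=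
  ⟨Finset.prod_nonneg fun _ _ => (bump_mem _ _).1,
    Finset.prod_le_one (fun _ _ => (bump_mem _ _).1) fun _ _ => (bump_mem _ _).2⟩

theorem enorm_bumpProd_sub_le (c : ℝ) (N : ℕ) (n j k : Fin d → ℤ) :
    ‖bumpProd c N n k - bumpProd c N n j‖ₑ ≤ bumpModulus N (j - k) := by
  rw [Real.enorm_eq_ofReal_abs]
  refine ENNReal.ofReal_le_ofReal (le_min ?_ ?_)
  · simpa using abs_sub_le_of_le_of_le (bumpProd_mem c N n k).1 (bumpProd_mem c N n k).2
      (bumpProd_mem c N n j).1 (bumpProd_mem c N n j).2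
  · refine (abs_prod_sub_prod_le _ (fun _ => bump_mem _ _) (fun _ => bump_mem _ _)).trans ?_
    rw [Finset.sum_div]
    refine Finset.sum_le_sum fun i _ => (abs_bump_sub_le _ _ _).trans_eq ?_
    rw [sub_sub_sub_cancel_right, ← sub_div, abs_div, Nat.abs_cast, abs_sub_comm]
    simp

theorem bumpModulus_le_one (N : ℕ) (l : Fin d → ℤ) : bumpModulus N l ≤ 1 :=
  ENNReal.ofReal_le_one.2 (min_le_left _ _)

theorem tendsto_bumpModulus (l : Fin d → ℤ) :
    Tendsto (fun N => bumpModulus N l) atTop (𝓝 0) := by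
  have h : Tendsto (fun N : ℕ => min 1 ((∑ i, |(l i : ℝ)|) / N)) atTop (𝓝 (min 1 0)) :=
    tendsto_const_nhds.min (tendsto_const_div_atTop_nhds_zero_nat _)
  simpa [bumpModulus] using ENNReal.tendsto_ofReal h

theorem div_sub_ediv_mem_Ico (N : ℕ) [NeZero N] (k : ℤ) :
    (k : ℝ) / N - (k / (N : ℤ) : ℤ) ∈ Set.Ico (0 : ℝ) 1 := by
  have : ((k / (N : ℤ) : ℤ) : ℝ) = ⌊(k : ℝ) / N⌋ := by
    rw [Int.floor_div_natCast, Int.floor_intCast]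
  rw [this, Int.self_sub_floor]
  exact ⟨Int.fract_nonneg _, Int.fract_lt_one _⟩

theorem sub_ediv_mem_offsets {c : ℝ} (hc : c ≤ 2) {N : ℕ} [NeZero N] {n k : Fin d → ℤ}
    (h : bumpProd c N n k ≠ 0) : (n - fun i => k i / (N : ℤ)) ∈ offsets d := by
  refine Fintype.mem_piFinset.2 fun i => ?_
  have hi := abs_lt.1 (abs_lt_of_bump_ne_zero (Finset.prod_ne_zero_iff.1 h i (Finset.mem_univ i)))
  have hfract := div_sub_ediv_mem_Ico N (k i)
  have lower : (-2 : ℝ) ≤ (n i - k i / (N : ℤ) : ℤ) := by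
    push_cast
    linarith [hfract.1]
  have upper : ((n i - k i / (N : ℤ) : ℤ) : ℝ) < 3 := by
    push_cast
    linarith [hfract.2]
  rw [Finset.mem_Icc, Pi.sub_apply]
  exact ⟨by exact_mod_cast lower, Int.le_of_lt_add_one (by exact_mod_cast upper)⟩

theorem ediv_add_sub_mem_Icc {N : ℤ} (hN : 0 < N) (k l : ℤ) :
    (k + l) / N - k / N - l / N ∈ Finset.Icc (-2) 2 := by
  have carry : (k + l) / N - k / N - l / N = (k % N + l % N) / N := by
    have split : k + l = k % N + l % N + N * (k / N + l / N) := by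
      linear_combination -(Int.mul_ediv_add_emod k N) - Int.mul_ediv_add_emod l N
    rw [split, Int.add_mul_ediv_left _ _ hN.ne']
    ring
  have hk := Int.emod_nonneg k hN.ne'
  have hl := Int.emod_nonneg l hN.ne'
  have hk' := Int.emod_lt_of_pos k hN
  have hl' := Int.emod_lt_of_pos l hN
  rw [carry, Finset.mem_Icc]
  exact ⟨(by norm_num : (-2 : ℤ) ≤ 0).trans (Int.ediv_nonneg (by omega) hN.le),
    Int.ediv_le_of_le_mul hN (by omega)⟩

/-- The cutoffs of scale `N` on the integer lattice. -/
noncomputable def latticeCutoff (d N : ℕ) [NeZero N] : Cutoff (Fin d → ℤ) where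
  blk k i := k i / (N : ℤ)
  D := offsets d
  ψ := bumpProd 1 N
  θ := bumpProd 2 N
  ρ := bumpModulus N
  blk_add k l := Fintype.mem_piFinset.2 fun i =>
    ediv_add_sub_mem_Icc (Int.natCast_pos.2 (NeZero.pos N)) (k i) (l i)
  ψ_mem := bumpProd_mem 1 N
  θ_mem := bumpProd_mem 2 N
  ψ_supp _ _ := sub_ediv_mem_offsets one_le_two
  θ_supp _ _ := sub_ediv_mem_offsets le_rfl
  ψ_sum k := by
    simp only [bumpProd, offsets, Pi.add_apply]
    rw [← Finset.prod_univ_sum (fun _ => Finset.Icc (-2) 2)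
      (fun i δ => bump 1 ((k i : ℝ) / N - (k i / (N : ℤ) + δ : ℤ)))]
    refine Finset.prod_eq_one fun i _ => ?_
    obtain ⟨h0, h1⟩ := div_sub_ediv_mem_Ico N (k i)
    refine Eq.trans (Finset.sum_congr rfl fun δ _ => ?_) (sum_bump_one h0 h1)
    rw [Int.cast_add, sub_sub]
  θ_eq_one n k h := Finset.prod_eq_one fun i _ => bump_eq_one (by
    linarith [abs_lt_of_bump_ne_zero (Finset.prod_ne_zero_iff.1 h i (Finset.mem_univ i))])
  ψ_lip := enorm_bumpProd_sub_le 1 N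
  θ_lip := enorm_bumpProd_sub_le 2 N

theorem tendsto_tsum_mul_of_le {ι : Type*} {h : ι → ℝ≥0∞} (hh : ∑' l, h l ≠ ∞)
    {ρ : ℕ → ι → ℝ≥0∞} (hρ : ∀ N l, ρ N l ≤ 1)
    (hlim : ∀ l, Tendsto (fun N => ρ N l) atTop (𝓝 0)) :
    Tendsto (fun N => ∑' l, h l * ρ N l) atTop (𝓝 0) := by
  let _ : MeasurableSpace ι := ⊤
  have key := tendsto_lintegral_of_dominated_convergence (μ := (Measure.count : Measure ι))
    (F := fun N l => h l * ρ N l) (f := fun _ => 0) h (fun N => measurable_from_top)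
    (fun N => Eventually.of_forall fun l => mul_le_of_le_one_right zero_le (hρ N l))
    (by rwa [lintegral_count]) (Eventually.of_forall fun l => by
      simpa using ENNReal.Tendsto.const_mul (hlim l)
        (Or.inr (ENNReal.ne_top_of_tsum_ne_top hh l)))
  simpa only [lintegral_count, lintegral_zero] using key

theorem tendsto_tsum_mul_bumpModulus {h : (Fin d → ℤ) → ℝ≥0∞} (hh : ∑' l, h l ≠ ∞) :
    Tendsto (fun N => ∑' l, h l * bumpModulus (N + 1) l) atTop (𝓝 0) :=
  (tendsto_add_atTop_iff_nat 1).2 (tendsto_tsum_mul_of_le hh bumpModulus_le_one tendsto_bumpModulus)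

theorem tendsto_commBound_latticeCutoff {h : (Fin d → ℤ) → ℝ≥0∞} (hh : ∑' l, h l ≠ ∞) :
    Tendsto (fun N => (latticeCutoff d (N + 1)).commBound h) atTop (𝓝 0) := by
  simpa [Cutoff.commBound, latticeCutoff] using
    ENNReal.Tendsto.const_mul (a := ((offsets d).card + (offsets d).card ^ 2 : ℝ≥0∞))
      (tendsto_tsum_mul_bumpModulus hh) (Or.inr (by finiteness))

/-- The block of scale `N` with label `m`. -/
noncomputable def latticeBlock (N : ℕ) (m : Fin d → ℤ) : Finset (Fin d → ℤ) :=
  Fintype.piFinset fun i => Finset.Ico (m i * N) ((m i + 1) * N)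

theorem blk_preimage_singleton (N : ℕ) [NeZero N] (m : Fin d → ℤ) :
    (latticeCutoff d N).blk ⁻¹' {m} = latticeBlock N m := by
  have hN : (0 : ℤ) < N := Int.natCast_pos.2 (NeZero.pos N)
  ext k
  simp only [latticeCutoff, latticeBlock, Set.mem_preimage, Set.mem_singleton_iff, funext_iff,
    Finset.mem_coe, Fintype.mem_piFinset, Finset.mem_Ico]
  refine forall_congr' fun i => ?_
  rw [← Int.le_ediv_iff_mul_le hN, ← Int.ediv_lt_iff_lt_mul hN]
  omega

theorem fiberNorm_latticeCutoff_le {p : ℝ≥0∞} [Fact (1 ≤ p)] (N : ℕ) [NeZero N]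
    (a : (Fin d → ℤ) → ℝ≥0∞) (m : Fin d → ℤ) :
    fiberNorm p (latticeCutoff d N).blk a m ≤ N ^ d * fiberNorm ∞ (latticeCutoff d N).blk a m := by
  have card : (latticeBlock N m).card = N ^ d := by simp [latticeBlock, add_mul]
  simp only [fiberNorm, blk_preimage_singleton]
  exact_mod_cast card ▸ ellNorm_indicator_le_card_mul (latticeBlock N m) a

theorem ellNorm_indicator_preimage_blk_le {p : ℝ≥0∞} [Fact (1 ≤ p)] (N : ℕ) [NeZero N]
    (S : Set (Fin d → ℤ)) (a : (Fin d → ℤ) → ℝ≥0∞) :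
    ellNorm p (((latticeCutoff d N).blk ⁻¹' S).indicator a) ≤
      N ^ d * ellNorm p (S.indicator (fiberNorm ∞ (latticeCutoff d N).blk a)) := by
  rw [← ellNorm_fiberNorm (latticeCutoff d N).blk, ← ellNorm_const_mul]
  refine ellNorm_mono p fun m => (fiberNorm_latticeCutoff_le N _ m).trans ?_
  gcongr
  simp only [fiberNorm, Set.indicator_indicator]
  by_cases hm : m ∈ S
  · rw [Set.indicator_of_mem hm]
    exact ellNorm_mono ∞ fun k =>
      Set.indicator_le_indicator_of_subset Set.inter_subset_left (fun _ => zero_le) k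
  · rw [Set.indicator_of_notMem hm, ← Set.preimage_inter, Set.singleton_inter_eq_empty.2 hm]
    simp [ellNorm_top]

theorem finite_support_bumpProd (N : ℕ) [NeZero N] :
    (Function.support (bumpProd 2 N (0 : Fin d → ℤ))).Finite := by
  refine ((offsets d).finite_toSet.biUnion fun δ _ =>
    (latticeBlock N (-δ)).finite_toSet).subset fun k hk => ?_
  refine Set.mem_biUnion (sub_ediv_mem_offsets le_rfl hk) ?_
  rw [← blk_preimage_singleton]
  simp [latticeCutoff]

theorem tendsto_bumpProd (k : Fin d → ℤ) :
    Tendsto (fun N : ℕ => bumpProd 2 N 0 k) atTop (𝓝 1) := by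
  have small : ∀ i, ∀ᶠ N : ℕ in atTop, |(k i : ℝ) / N| ≤ 1 := fun i => by
    have := (tendsto_const_div_atTop_nhds_zero_nat (k i : ℝ)).abs
    rw [abs_zero] at this
    exact this.eventually_le_const zero_lt_one
  refine tendsto_const_nhds.congr' ?_
  filter_upwards [eventually_all.2 small] with N hN
  refine (Finset.prod_eq_one fun i _ => bump_eq_one ?_).symm
  simpa [show (2 : ℝ) - 1 = 1 by norm_num] using hN i

end lattice

/-! ### Bounded solutions for different exponents -/

section limits

variable {ι τ F E : Type*} [AddCommGroup ι] [NormedAddCommGroup F] [NormedSpace ℝ F]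
  [NormedAddCommGroup E] [NormedSpace ℝ E] [CompleteSpace E]
  {B : ι → ι → F →L[ℝ] E} {h : ι → ℝ≥0∞} {M : ℝ≥0∞} {u : τ → ι → F}

theorem ConvDominated.tendsto_matrixOp (hB : ConvDominated B h) {l : Filter τ} (hM : M ≠ ∞)
    (hu : ∀ t k, ‖u t k‖ₑ ≤ M) {s : ι → F} (hs : ∀ k, Tendsto (fun t => u t k) l (𝓝 (s k)))
    (j : ι) : Tendsto (fun t => matrixOp B (u t) j) l (𝓝 (matrixOp B s j)) := by
  have hh : ∑' k, h (j - k) ≠ ∞ := ((Equiv.subLeft j).tsum_eq h).trans_ne hB.tsum_ne_top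
  refine tendsto_tsum_of_dominated_convergence (bound := fun k => (h (j - k) * M).toReal)
    (ENNReal.summable_toReal ?_) (fun k => ((B j k).continuous.tendsto _).comp (hs k))
    (Eventually.of_forall fun t k => ?_)
  · rw [ENNReal.tsum_mul_right]
    exact ENNReal.mul_ne_top hh hM
  · rw [← toReal_enorm]
    refine ENNReal.toReal_mono
      (ENNReal.mul_ne_top (ENNReal.ne_top_of_tsum_ne_top hh k) hM) ((hB.enorm_le j k _).trans ?_)
    gcongr
    exact hu t k

theorem ConvDominated.exists_limit [ProperSpace F] (hB : ConvDominated B h) (l : Ultrafilter τ)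
    (hM : M ≠ ∞) (hu : ∀ t k, ‖u t k‖ₑ ≤ M) {g : ι → E}
    (hg : ∀ j, Tendsto (fun t => matrixOp B (u t) j) l (𝓝 (g j))) :
    ∃ s : ι → F, matrixOp B s = g ∧ ∀ k, Tendsto (fun t => u t k) l (𝓝 (s k)) := by
  have mem_ball : ∀ t, u t ∈ Set.univ.pi fun _ => Metric.closedBall (0 : F) M.toReal :=
    fun t k _ => by
      rw [mem_closedBall_zero_iff, ← toReal_enorm]
      exact ENNReal.toReal_mono hM (hu t k)
  obtain ⟨s, -, hs⟩ := (isCompact_univ_pi fun _ =>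
    isCompact_closedBall (0 : F) M.toReal).ultrafilter_le_nhds (l.map u)
      (le_principal_iff.2 (Ultrafilter.mem_map.2 (univ_mem' mem_ball)))
  have hs' := tendsto_pi_nhds.1 hs
  exact ⟨s, funext fun j => tendsto_nhds_unique (hB.tendsto_matrixOp hM hu hs' j) (hg j), hs'⟩

theorem ConvDominated.ellNorm_top_matrixOp_smul_le {ι : Type u} [AddCommGroup ι]
    {B : ι → ι → F →L[ℝ] E} {h : ι → ℝ≥0∞} (hB : ConvDominated B h) {x : ι → F} (hx : BddFamily x)
    {χ : ι → ℝ} (hχ : ∀ k, χ k ∈ Set.Icc (0 : ℝ) 1) {ρ : ι → ℝ≥0∞}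
    (hρ : ∀ j k, ‖χ k - χ j‖ₑ ≤ ρ (j - k)) :
    ellNorm ∞ (fun j => ‖matrixOp B (χ • x) j‖ₑ) ≤
      ellNorm ∞ (fun j => ‖matrixOp B x j‖ₑ) + (∑' l, h l * ρ l) * ellNorm ∞ fun k => ‖x k‖ₑ := by
  have pointwise : ∀ j, ‖matrixOp B (χ • x) j‖ₑ ≤
      ‖matrixOp B x j‖ₑ + discreteConv (fun l => h l * ρ l) (fun k => ‖x k‖ₑ) j := fun j => by
    refine (hB.enorm_matrixOp_smul_le hx hχ j).trans
      (add_le_add ?_ (ENNReal.tsum_le_tsum fun k => ?_))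
    · rw [← enorm_smul]
      exact enorm_smul_le_of_mem_Icc (hχ j) _
    · rw [mul_assoc]
      gcongr
      exact hρ j k
  refine (ellNorm_mono ∞ pointwise).trans ((ellNorm_add_le _ _).trans (add_le_add le_rfl ?_))
  simpa using (ShiftBoundedNorm.ellNorm ∞).discreteConv_le (fun l => h l * ρ l) fun k => ‖x k‖ₑ

end limits

section chains

variable {d : ℕ} {F E : Type*} [NormedAddCommGroup F] [NormedSpace ℝ F]
  [NormedAddCommGroup E] [NormedSpace ℝ E]
  {B : (Fin d → ℤ) → (Fin d → ℤ) → F →L[ℝ] E} {h : (Fin d → ℤ) → ℝ≥0∞} {p q C : ℝ≥0∞}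
  [Fact (1 ≤ p)] [Fact (1 ≤ q)]

/-- The constant produced by `HasBoundedSolutions.bootstrap` for lattice cutoffs. -/
noncomputable def bootConst (d : ℕ) (C : ℝ≥0∞) : ℝ≥0∞ :=
  (offsets d).card * C * ((offsets d).card + 1) + 1

theorem bootConst_ne_top (hC : C ≠ ∞) : bootConst d C ≠ ∞ := by
  unfold bootConst
  finiteness

theorem le_bootConst (d : ℕ) (C : ℝ≥0∞) : C ≤ bootConst d C := by
  have : (1 : ℝ≥0∞) ≤ (offsets d).card := by
    exact_mod_cast Finset.card_pos.2 ⟨0, by simp [offsets]⟩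
  calc C = 1 * C * 1 := by ring
    _ ≤ (offsets d).card * C * ((offsets d).card + 1) := by
        gcongr
        exact le_add_self
    _ ≤ bootConst d C := le_self_add

theorem HasBoundedSolutions.amalgam (hP : HasBoundedSolutions B (ellNorm p) C)
    (χ : Cutoff (Fin d → ℤ)) :
    HasBoundedSolutions B (χ.amalgam p (ellNorm p)) (bootConst d C) := by
  rw [show χ.amalgam p (ellNorm p) = ellNorm p from funext (ellNorm_fiberNorm χ.blk)]
  intro x hx
  obtain ⟨s, hs_eq, hs⟩ := hP x hx
  exact ⟨s, hs_eq, hs.trans (by gcongr; exact le_bootConst d C)⟩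

variable [CompleteSpace E]

/-- Since the constant is reproduced, the conclusion can be iterated along a chain of norms. -/
theorem exists_scale (hB : ConvDominated B h) (hC : C ≠ ∞)
    (hP : HasBoundedSolutions B (ellNorm p) C) :
    ∃ N : ℕ, ∀ {n n' : ((Fin d → ℤ) → ℝ≥0∞) → ℝ≥0∞} {a b : ℝ≥0∞}, ShiftBoundedNorm n' 1 →
      (∀ u, ellNorm ∞ u ≤ n' u) → a * b = 2 → b ≠ ∞ → (∀ u, n u ≤ b * n' u) →
      (∀ u, n' u ≤ a * n u) →
      HasBoundedSolutions B ((latticeCutoff d (N + 1)).amalgam p n) (bootConst d C) →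
      HasBoundedSolutions B ((latticeCutoff d (N + 1)).amalgam p n') (bootConst d C) := by
  set κ := 2 * bootConst d C
  have hκ : κ ≠ ∞ := ENNReal.mul_ne_top ofNat_ne_top (bootConst_ne_top hC)
  set D : ℝ≥0∞ := ((offsets d).card : ℝ≥0∞)
  have small : Tendsto (fun N => (κ + 1) * ((latticeCutoff d (N + 1)).commBound h *
      (D * κ + C * (D + 1) + 1))) atTop (𝓝 0) := by
    simpa using ENNReal.Tendsto.const_mul (ENNReal.Tendsto.mul_const
      (tendsto_commBound_latticeCutoff hB.tsum_ne_top) (Or.inr (by finiteness)))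
      (Or.inr (by finiteness))
  obtain ⟨N, hN⟩ := (small.eventually_le_const zero_lt_one).exists
  refine ⟨N, fun hn' hn'_top hab hb hnn' hn'n hQ => ?_⟩
  have hQ' := hQ.of_equiv (n' := (latticeCutoff d (N + 1)).amalgam p _) hb
    (fun _ => hnn' _) fun _ => hn'n _
  rw [hab] at hQ'
  exact HasBoundedSolutions.bootstrap _ hn' hn'_top hB hC hκ hP hQ' hN

theorem exists_scale_max (hB : ConvDominated B h) (hC : C ≠ ∞)
    (hP : HasBoundedSolutions B (ellNorm p) C) :
    ∃ N : ℕ, ∀ i : ℕ, HasBoundedSolutions B ((latticeCutoff d (N + 1)).amalgam p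
      fun u => max (ellNorm ∞ u) (2⁻¹ ^ i * ellNorm p u)) (bootConst d C) := by
  obtain ⟨N, hN⟩ := exists_scale hB hC hP
  refine ⟨N, fun i => ?_⟩
  induction i with
  | zero => simpa [ellNorm_top_le] using hP.amalgam (latticeCutoff d (N + 1))
  | succ i ih =>
    refine hN (.max (.ellNorm ∞) (.mul_left (.ellNorm p) _)) (fun _ => le_max_left _ _)
      (one_mul 2) ofNat_ne_top (fun u => ?_) (fun u => ?_) ih
    · rw [mul_max, ← mul_assoc, pow_succ', ← mul_assoc, ENNReal.mul_inv_cancel two_ne_zero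
        ofNat_ne_top, one_mul]
      exact max_le_max (le_mul_of_one_le_left' one_le_two) le_rfl
    · rw [one_mul, pow_succ', mul_assoc]
      exact max_le_max le_rfl (mul_le_of_le_one_left' (by simp))

theorem HasBoundedSolutions.exists_sup_bound (hB : ConvDominated B h) (hC : C ≠ ∞)
    (hP : HasBoundedSolutions B (ellNorm p) C) :
    ∃ A : ℝ≥0∞, A ≠ ∞ ∧ ∀ x : (Fin d → ℤ) → F, ellNorm p (fun k => ‖x k‖ₑ) ≠ ∞ → ∀ η ≠ 0,
      ∃ s : (Fin d → ℤ) → F, matrixOp B s = matrixOp B x ∧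
        ellNorm ∞ (fun k => ‖s k‖ₑ) ≤ A * (ellNorm ∞ (fun j => ‖matrixOp B x j‖ₑ) + η) := by
  obtain ⟨N, hN⟩ := exists_scale_max hB hC hP
  set χ := latticeCutoff d (N + 1)
  refine ⟨bootConst d C * (N + 1 : ℕ) ^ d,
    ENNReal.mul_ne_top (bootConst_ne_top hC) (by finiteness), fun x hx η hη => ?_⟩
  set b : (Fin d → ℤ) → ℝ≥0∞ := fun j => ‖matrixOp B x j‖ₑ
  have hb : ellNorm p b ≠ ∞ := hB.ellNorm_matrixOp_ne_top hx
  obtain ⟨i, hi⟩ : ∃ i : ℕ, 2⁻¹ ^ i * ellNorm p b ≤ η := by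
    have := ENNReal.Tendsto.mul_const (b := ellNorm p b)
      (ENNReal.tendsto_pow_atTop_nhds_zero_of_lt_one (r := 2⁻¹) (by simp)) (Or.inr hb)
    rw [zero_mul] at this
    exact (this.eventually_le_const (pos_iff_ne_zero.2 hη)).exists
  obtain ⟨s, hs_eq, hs⟩ := hN i x (ne_top_of_le_ne_top hx
    ((max_le (ellNorm_top_le _) (mul_le_of_le_one_left' (pow_le_one₀ zero_le (by simp)))).trans_eq
      (ellNorm_fiberNorm χ.blk _)))
  refine ⟨s, hs_eq, (χ.ellNorm_top_le_amalgam (fun _ => le_max_left _ _) _).trans (hs.trans ?_)⟩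
  rw [mul_assoc]
  gcongr
  refine max_le ?_ ?_
  · calc _ ≤ ellNorm ∞ fun m => (N + 1 : ℕ) ^ d * fiberNorm ∞ χ.blk b m :=
          ellNorm_mono ∞ (fiberNorm_latticeCutoff_le (N + 1) b)
      _ = (N + 1 : ℕ) ^ d * ellNorm ∞ b := by rw [ellNorm_const_mul, ellNorm_fiberNorm]
      _ ≤ _ := by
          gcongr
          exact le_self_add
  · rw [ellNorm_fiberNorm]
    exact hi.trans (le_add_self.trans (le_mul_of_one_le_left' (one_le_pow₀ (by simp))))

variable (p) in
theorem ConvDominated.exists_truncation (hB : ConvDominated B h) {x : (Fin d → ℤ) → F}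
    (hx : BddFamily x) {η : ℝ≥0∞} (hη : η ≠ 0) :
    ∃ u : ℕ → (Fin d → ℤ) → F, (∀ R, ellNorm p (fun k => ‖u R k‖ₑ) ≠ ∞) ∧
      (∀ R, ellNorm ∞ (fun j => ‖matrixOp B (u R) j‖ₑ) ≤
        ellNorm ∞ (fun j => ‖matrixOp B x j‖ₑ) + η) ∧
      ∀ j, Tendsto (fun R => matrixOp B (u R) j) atTop (𝓝 (matrixOp B x j)) := by
  have small := ENNReal.Tendsto.mul_const (tendsto_tsum_mul_bumpModulus hB.tsum_ne_top)
    (Or.inr hx)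
  rw [zero_mul] at small
  obtain ⟨R₀, hR₀⟩ := eventually_atTop.1 (small.eventually_le_const (pos_iff_ne_zero.2 hη))
  have truncation_le : ∀ (R : ℕ) k, ‖(bumpProd 2 (R + R₀ + 1) (0 : Fin d → ℤ) • x) k‖ₑ ≤ ‖x k‖ₑ :=
    fun R k => enorm_smul_le_of_mem_Icc (bumpProd_mem 2 (R + R₀ + 1) 0 k) (x k)
  refine ⟨fun R => bumpProd 2 (R + R₀ + 1) (0 : Fin d → ℤ) • x, fun R => ?_, fun R => ?_,
    fun j => ?_⟩
  · have hfin := finite_support_bumpProd (d := d) (R + R₀ + 1)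
    refine ne_top_of_le_ne_top (ENNReal.mul_ne_top (natCast_ne_top hfin.toFinset.card) hx) ?_
    calc _ ≤ ellNorm p ((hfin.toFinset : Set (Fin d → ℤ)).indicator fun k => ‖x k‖ₑ) := by
          refine ellNorm_mono p fun k => ?_
          by_cases hk : bumpProd 2 (R + R₀ + 1) 0 k = 0
          · simp [hk]
          · simpa [hk] using truncation_le R k
      _ ≤ _ := (ellNorm_indicator_le_card_mul _ _).trans (by
          gcongr
          exact ellNorm_indicator_le ∞ fun _ _ => le_rfl)
  · exact (hB.ellNorm_top_matrixOp_smul_le hx (bumpProd_mem _ _ _)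
      (enorm_bumpProd_sub_le 2 _ 0)).trans (add_le_add le_rfl (hR₀ _ (Nat.le_add_left _ _)))
  · refine hB.tendsto_matrixOp hx (fun R k => (truncation_le R k).trans (le_ellNorm ∞ _ k))
      (fun k => ?_) j
    simpa [add_assoc] using
      ((tendsto_add_atTop_iff_nat (R₀ + 1)).2 (tendsto_bumpProd k)).smul_const (x k)

theorem HasBoundedSolutions.to_top [ProperSpace F] (hB : ConvDominated B h) (hC : C ≠ ∞)
    (hP : HasBoundedSolutions B (ellNorm p) C) :
    ∃ C' : ℝ≥0∞, C' ≠ ∞ ∧ HasBoundedSolutions B (ellNorm ∞) C' := by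
  obtain ⟨A, hA, hsolve⟩ := HasBoundedSolutions.exists_sup_bound hB hC hP
  refine ⟨A * 3, ENNReal.mul_ne_top hA ofNat_ne_top, fun x hx => ?_⟩
  set G := ellNorm ∞ fun j => ‖matrixOp B x j‖ₑ with hG
  have hG_top : G ≠ ∞ := hB.ellNorm_matrixOp_ne_top hx
  rcases eq_or_ne G 0 with hG0 | hG0
  · have image_zero : matrixOp B x = 0 := funext fun j => by
      simpa [hG0] using (le_ellNorm ∞ (fun j => ‖matrixOp B x j‖ₑ) j).trans_eq hG.symm
    exact ⟨0, by simp [image_zero, funext_iff, matrixOp], by simp [ellNorm_zero]⟩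
  obtain ⟨u, hu, hu_image, hu_tendsto⟩ := hB.exists_truncation p hx hG0
  choose s hs_eq hs using fun R => hsolve (u R) (hu R) G hG0
  have hs_le : ∀ R k, ‖s R k‖ₑ ≤ A * 3 * G := fun R k => by
    refine (le_ellNorm ∞ (fun k => ‖s R k‖ₑ) k).trans ((hs R).trans ?_)
    rw [mul_assoc]
    gcongr
    exact (add_le_add (hu_image R) le_rfl).trans_eq (by ring)
  obtain ⟨y, hy_eq, hy⟩ := hB.exists_limit (hyperfilter ℕ)
    (ENNReal.mul_ne_top (ENNReal.mul_ne_top hA ofNat_ne_top) hG_top) hs_le fun j => by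
      simpa only [hs_eq] using (hu_tendsto j).mono_left Nat.hyperfilter_le_atTop
  refine ⟨y, hy_eq, (ellNorm_top _).trans_le (iSup_le fun k => ?_)⟩
  exact le_of_tendsto ((continuous_enorm.tendsto _).comp (hy k))
    (Eventually.of_forall fun R => hs_le R k)

variable (q) in
theorem exists_scale_window (hB : ConvDominated B h) (hC : C ≠ ∞)
    (hP : HasBoundedSolutions B (ellNorm ∞) C) :
    ∃ N : ℕ, ∀ S : Finset (Fin d → ℤ), HasBoundedSolutions B
      ((latticeCutoff d (N + 1)).amalgam ∞ (windowNorm q (insert 0 S))) (bootConst d C) := by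
  classical
  obtain ⟨N, hN⟩ := exists_scale hB hC hP
  refine ⟨N, fun S => ?_⟩
  induction S using Finset.induction_on with
  | empty =>
    have singleton_eq : windowNorm q {(0 : Fin d → ℤ)} = ellNorm ∞ := funext fun a =>
      (windowNorm_singleton_le q 0 a).antisymm
        (ellNorm_top_le_windowNorm q (Set.mem_singleton 0) a)
    rw [Finset.coe_empty, insert_empty_eq, singleton_eq]
    exact hP.amalgam _
  | insert x S _ ih =>
    rw [Finset.coe_insert, Set.insert_comm]
    refine hN (.windowNorm q _) (ellNorm_top_le_windowNorm q (by simp)) (mul_one 2) one_ne_top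
      (fun u => ?_) (windowNorm_insert_le q (Set.mem_insert _ _) x) ih
    rw [one_mul]
    exact windowNorm_mono q (Set.subset_insert _ _) u

theorem HasBoundedSolutions.of_top [ProperSpace F] (hB : ConvDominated B h) (hC : C ≠ ∞)
    (hP : HasBoundedSolutions B (ellNorm ∞) C) :
    ∃ C' : ℝ≥0∞, C' ≠ ∞ ∧ HasBoundedSolutions B (ellNorm q) C' := by
  classical
  obtain ⟨N, hN⟩ := exists_scale_window q hB hC hP
  set χ := latticeCutoff d (N + 1)
  set A := bootConst d C
  have hA : A ≠ ∞ := bootConst_ne_top hC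
  refine ⟨(N + 1 : ℕ) ^ d * A, by finiteness, fun x hx => ?_⟩
  set G := ellNorm q fun j => ‖matrixOp B x j‖ₑ
  have hG : G ≠ ∞ := hB.ellNorm_matrixOp_ne_top hx
  have amalgam_le : ∀ (S : Set (Fin d → ℤ)) a, χ.amalgam ∞ (windowNorm q S) a ≤ ellNorm q a :=
    fun S a => (windowNorm_le_ellNorm q S _).trans
      ((ellNorm_mono q fun m => ellNorm_top_le _).trans_eq (ellNorm_fiberNorm χ.blk a))
  choose s hs_eq hs using fun S => hN S x (ne_top_of_le_ne_top hx (amalgam_le _ _))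
  replace hs : ∀ S : Finset (Fin d → ℤ),
      χ.amalgam ∞ (windowNorm q (insert 0 S)) (fun k => ‖s S k‖ₑ) ≤ A * G := fun S =>
    (hs S).trans (by gcongr; exact amalgam_le _ _)
  have hs_le : ∀ S k, ‖s S k‖ₑ ≤ A * G := fun S k => (le_ellNorm ∞ _ k).trans
    ((χ.ellNorm_top_le_amalgam (ellNorm_top_le_windowNorm q (Set.mem_insert 0 _)) _).trans (hs S))
  set l : Ultrafilter (Finset (Fin d → ℤ)) := Ultrafilter.of atTop
  obtain ⟨y, hy_eq, hy⟩ := hB.exists_limit l (by finiteness) hs_le fun j => by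
    simpa only [hs_eq] using tendsto_const_nhds
  refine ⟨y, hy_eq, ellNorm_le_of_tendsto (l := (l : Filter (Finset (Fin d → ℤ))))
    (u := fun S => (χ.blk ⁻¹' insert 0 S).indicator fun k => ‖s S k‖ₑ) (fun k => ?_)
    (Eventually.of_forall fun S => ?_)⟩
  · refine Tendsto.congr' ?_ ((continuous_enorm.tendsto _).comp (hy k))
    filter_upwards [Ultrafilter.of_le atTop (eventually_ge_atTop {χ.blk k})] with S hS
    have hk : k ∈ χ.blk ⁻¹' insert 0 ↑S :=
      Set.mem_insert_of_mem _ (hS (Finset.mem_singleton_self _))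
    rw [Set.indicator_of_mem hk]
    rfl
  · refine (ellNorm_indicator_preimage_blk_le (N + 1) _ _).trans ?_
    rw [mul_assoc]
    gcongr
    refine le_trans ?_ (hs S)
    exact ellNorm_indicator_le_windowNorm q _ _

theorem HasBoundedSolutions.exponent_independent [ProperSpace F] (hB : ConvDominated B h)
    (hC : C ≠ ∞) (hP : HasBoundedSolutions B (ellNorm p) C) :
    ∃ C' : ℝ≥0∞, C' ≠ ∞ ∧ HasBoundedSolutions B (ellNorm q) C' := by
  obtain ⟨C₁, hC₁, h₁⟩ := HasBoundedSolutions.to_top hB hC hP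
  exact HasBoundedSolutions.of_top hB hC₁ h₁

end chains

/-! ### Closed range and bounded solutions -/

section lpSpaces

variable {ι G : Type*} [NormedAddCommGroup G] {p : ℝ≥0∞} [Fact (1 ≤ p)]

theorem memℓp_iff_ellNorm_ne_top {f : ι → G} : Memℓp f p ↔ ellNorm p (fun k => ‖f k‖ₑ) ≠ ∞ := by
  rcases p.dichotomy with rfl | hp
  · rw [memℓp_infty_iff, ellNorm_top]
    constructor
    · rintro ⟨M, hM⟩
      refine ne_top_of_le_ne_top (ENNReal.ofReal_ne_top (r := M)) (iSup_le fun k => ?_)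
      rw [← ofReal_norm]
      exact ENNReal.ofReal_le_ofReal (hM ⟨k, rfl⟩)
    · refine fun h => ⟨(⨆ k, ‖f k‖ₑ).toReal, Set.forall_mem_range.2 fun k => ?_⟩
      rw [← toReal_enorm]
      exact ENNReal.toReal_mono h (le_iSup (fun k => ‖f k‖ₑ) k)
  · have hp₀ : 0 < p.toReal := zero_lt_one.trans_le hp
    have enorm_rpow (k) : ‖f k‖ₑ ^ p.toReal = ENNReal.ofReal (‖f k‖ ^ p.toReal) := by
      rw [← ENNReal.ofReal_rpow_of_nonneg (norm_nonneg _) hp₀.le, ofReal_norm]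
    rw [memℓp_gen_iff hp₀, ellNorm_eq_tsum hp, Ne,
      ENNReal.rpow_eq_top_iff_of_pos (by positivity)]
    simp only [enorm_rpow]
    refine ⟨fun h => h.tsum_ofReal_ne_top, fun h => (ENNReal.summable_toReal h).congr fun k => ?_⟩
    rw [ENNReal.toReal_ofReal (by positivity)]

theorem enorm_lp_eq_ellNorm (f : lp (fun _ : ι => G) p) :
    ‖f‖ₑ = ellNorm p (fun k => ‖f k‖ₑ) := by
  rcases p.dichotomy with rfl | hp
  · have hf := memℓp_iff_ellNorm_ne_top.1 (lp.memℓp f)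
    rw [ellNorm_top] at hf ⊢
    refine le_antisymm ?_ (iSup_le fun k => ?_)
    · rw [← ENNReal.ofReal_toReal hf, ← ofReal_norm]
      refine ENNReal.ofReal_le_ofReal (lp.norm_le_of_forall_le ENNReal.toReal_nonneg fun k => ?_)
      rw [← toReal_enorm]
      exact ENNReal.toReal_mono hf (le_iSup (fun k => ‖f k‖ₑ) k)
    · exact enorm_le_iff_norm_le.2 (lp.norm_apply_le_norm (by simp) f k)
  · have hp₀ : 0 < p.toReal := zero_lt_one.trans_le hp
    have enorm_rpow : ‖f‖ₑ ^ p.toReal = ∑' k, ‖f k‖ₑ ^ p.toReal := by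
      have hf := (memℓp_gen_iff hp₀).1 (lp.memℓp f)
      simp only [← ofReal_norm, ENNReal.ofReal_rpow_of_nonneg (norm_nonneg _) hp₀.le]
      rw [lp.norm_rpow_eq_tsum hp₀, ENNReal.ofReal_tsum_of_nonneg (fun k => by positivity) hf]
    rw [ellNorm_eq_tsum hp, ← enorm_rpow, one_div, ENNReal.rpow_rpow_inv hp₀.ne']

end lpSpaces

section closedRange

variable {ι : Type u} [AddCommGroup ι] {F E : Type*} [NormedAddCommGroup F] [NormedSpace ℝ F]
  [NormedAddCommGroup E] [NormedSpace ℝ E] [CompleteSpace E]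
  {B : ι → ι → F →L[ℝ] E} {h : ι → ℝ≥0∞} {p : ℝ≥0∞} [Fact (1 ≤ p)]

namespace ConvDominated

variable (p) in
/-- The operator from `ℓ^p` to `ℓ^p` given by a matrix dominated by a summable sequence. -/
noncomputable def lpMap (hB : ConvDominated B h) :
    lp (fun _ : ι => F) p →L[ℝ] lp (fun _ : ι => E) p :=
  LinearMap.mkContinuous
    { toFun f := ⟨matrixOp B f, memℓp_iff_ellNorm_ne_top.2
        (hB.ellNorm_matrixOp_ne_top (memℓp_iff_ellNorm_ne_top.1 (lp.memℓp f)))⟩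
      map_add' f g := Subtype.ext (hB.matrixOp_add
        (.of_ellNorm (memℓp_iff_ellNorm_ne_top.1 (lp.memℓp f)))
        (.of_ellNorm (memℓp_iff_ellNorm_ne_top.1 (lp.memℓp g))))
      map_smul' c f := Subtype.ext (matrixOp_smul c f) }
    (∑' l, h l).toReal fun f => by
      rw [← toReal_enorm, ← toReal_enorm, ← ENNReal.toReal_mul]
      refine ENNReal.toReal_mono (ENNReal.mul_ne_top hB.tsum_ne_top enorm_ne_top) ?_
      rw [enorm_lp_eq_ellNorm, enorm_lp_eq_ellNorm]
      exact hB.ellNorm_matrixOp_le f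

theorem coe_lpMap (hB : ConvDominated B h) (f : lp (fun _ : ι => F) p) :
    ⇑(hB.lpMap p f) = matrixOp B f := rfl

theorem hasBoundedSolutions_iff (hB : ConvDominated B h) {C : ℝ≥0∞} (hC : C ≠ ∞) :
    HasBoundedSolutions B (ellNorm p) C ↔
      ∀ f, ∃ g, hB.lpMap p g = hB.lpMap p f ∧ ‖g‖ₑ ≤ C * ‖hB.lpMap p f‖ₑ := by
  simp only [enorm_lp_eq_ellNorm, coe_lpMap]
  refine ⟨fun hP f => ?_, fun hT x hx => ?_⟩
  · have hf := memℓp_iff_ellNorm_ne_top.1 (lp.memℓp f)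
    obtain ⟨s, hs, hsC⟩ := hP f hf
    have hs_mem : Memℓp s p := memℓp_iff_ellNorm_ne_top.2
      (ne_top_of_le_ne_top (ENNReal.mul_ne_top hC (hB.ellNorm_matrixOp_ne_top hf)) hsC)
    exact ⟨⟨s, hs_mem⟩, Subtype.ext hs, hsC⟩
  · obtain ⟨g, hg, hgC⟩ := hT ⟨x, memℓp_iff_ellNorm_ne_top.2 hx⟩
    exact ⟨g, congrArg Subtype.val hg, hgC⟩

theorem isClosed_range_lpMap_iff [CompleteSpace F] (hB : ConvDominated B h) :
    IsClosed (Set.range (hB.lpMap p)) ↔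
      ∃ C : ℝ≥0∞, C ≠ ∞ ∧ HasBoundedSolutions B (ellNorm p) C := by
  refine ⟨fun hcl => ?_, fun ⟨C, hC, hP⟩ => ?_⟩
  · have : IsClosed ((hB.lpMap p).range : Set (lp (fun _ : ι => E) p)) := hcl
    have : CompleteSpace (hB.lpMap p).range := this.completeSpace_coe
    obtain ⟨C, hC, hsol⟩ := (hB.lpMap p).rangeRestrict.exists_preimage_norm_le
      (hB.lpMap p).toLinearMap.surjective_rangeRestrict
    refine ⟨ENNReal.ofReal C, ofReal_ne_top, (hB.hasBoundedSolutions_iff ofReal_ne_top).2 ?_⟩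
    intro f
    obtain ⟨g, hg, hgC⟩ := hsol ((hB.lpMap p).rangeRestrict f)
    refine ⟨g, congrArg Subtype.val hg, ?_⟩
    rw [← ofReal_norm, ← ofReal_norm, ← ENNReal.ofReal_mul hC.le]
    exact ENNReal.ofReal_le_ofReal hgC
  · let T := (hB.lpMap p).toLinearMap.toAddMonoidHom.mkNormedAddGroupHom _ (hB.lpMap p).le_opNorm
    have hT : T.SurjectiveOnWith T.range C.toReal := by
      rintro _ ⟨f, rfl⟩
      obtain ⟨g, hg, hgC⟩ := (hB.hasBoundedSolutions_iff hC).1 hP f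
      refine ⟨g, hg, ?_⟩
      have := ENNReal.toReal_mono (ENNReal.mul_ne_top hC enorm_ne_top) hgC
      rwa [ENNReal.toReal_mul, toReal_enorm, toReal_enorm] at this
    obtain ⟨C', hC', hTC'⟩ := hT.exists_pos
    refine isClosed_of_closure_subset fun y hy => ?_
    obtain ⟨g, hg, -⟩ := controlled_closure_of_complete hC' one_pos hTC' y hy
    exact ⟨g, hg⟩

end ConvDominated

end closedRange

/-! ### Weakening the norm of the target space -/

section weaken

theorem exists_pos_forall_le_norm_of_injective {E E' : Type*} [NormedAddCommGroup E]
    [NormedSpace ℝ E] [NormedAddCommGroup E'] [NormedSpace ℝ E'] {J : E →L[ℝ] E'}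
    (hJ : Function.Injective J) {K : Set E} (hK : IsCompact K) {δ : ℝ} (hδ : 0 < δ) :
    ∃ c > 0, ∀ y ∈ K, δ ≤ ‖y‖ → c ≤ ‖J y‖ := by
  obtain ⟨c, hc, hcJ⟩ := (hK.inter_right (isClosed_le continuous_const continuous_norm))
    |>.exists_forall_le' (f := fun y => ‖J y‖) (a := 0) J.continuous.norm.continuousOn
    fun y (hy : y ∈ K ∧ δ ≤ ‖y‖) => norm_pos_iff.2 <| (map_ne_zero_iff J hJ).2 <|
      norm_pos_iff.1 (hδ.trans_le hy.2)
  exact ⟨c, hc, fun y hy hyδ => hcJ y ⟨hy, hyδ⟩⟩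

variable {ι : Type u} {F E E' : Type*} [NormedAddCommGroup F] [NormedSpace ℝ F]
  [NormedAddCommGroup E] [NormedSpace ℝ E] [NormedAddCommGroup E'] [NormedSpace ℝ E']
  {A : ι → F →L[ℝ] E} {t : ι → ι → ℝ} {α τ : ι → ℝ≥0∞} {C : ℝ≥0∞}

theorem isCompact_image_tsum [CompleteSpace E] [ProperSpace F]
    (hA : ∀ l v, ‖A l v‖ₑ ≤ α l * ‖v‖ₑ) {ρ : ι → ℝ≥0∞} (hρ_top : ∀ l, ρ l ≠ ∞)
    (hρ : ∑' l, α l * ρ l ≠ ∞) :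
    IsCompact ((fun w : ι → F => ∑' l, A l (w l)) '' {w | ∀ l, ‖w l‖ₑ ≤ ρ l}) := by
  have polydisc : {w : ι → F | ∀ l, ‖w l‖ₑ ≤ ρ l} =
      Set.univ.pi fun l => Metric.closedBall 0 (ρ l).toReal := by
    ext w
    simp only [Set.mem_ofPred_eq, Set.mem_univ_pi, mem_closedBall_zero_iff]
    refine forall_congr' fun l => ?_
    rw [← toReal_enorm, ENNReal.toReal_le_toReal enorm_ne_top (hρ_top l)]
  refine IsCompact.image_of_continuousOn ?_ ?_
  · rw [polydisc]
    exact isCompact_univ_pi fun l => isCompact_closedBall _ _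
  · refine continuousOn_tsum (u := fun l => (α l * ρ l).toReal)
      (fun l => ((A l).continuous.comp (continuous_apply l)).continuousOn)
      (ENNReal.summable_toReal hρ) fun l w hw => ?_
    rw [← toReal_enorm]
    exact ENNReal.toReal_mono (ENNReal.ne_top_of_tsum_ne_top hρ l)
      ((hA l _).trans (by gcongr; exact hw l))

variable [AddCommGroup ι]

theorem ConvDominated.smul_comp_sub (hA : ∀ l v, ‖A l v‖ₑ ≤ α l * ‖v‖ₑ)
    (ht : ∀ j k, ‖t j k‖ₑ ≤ τ (j - k)) (hατ : ∑' l, α l * τ l ≠ ∞) :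
    ConvDominated (fun j k => t j k • A (j - k)) (fun l => α l * τ l) where
  enorm_le j k v := by
    rw [_root_.smul_apply, enorm_smul, mul_comm, mul_right_comm]
    exact mul_le_mul' (hA _ _) (ht _ _)
  tsum_ne_top := hατ

variable [CompleteSpace E]

theorem ConvDominated.matrixOp_clm_comp {B : ι → ι → F →L[ℝ] E} {h : ι → ℝ≥0∞}
    (hB : ConvDominated B h) (J : E →L[ℝ] E') {x : ι → F} (hx : BddFamily x) (j : ι) :
    matrixOp (fun j k => J ∘L B j k) x j = J (matrixOp B x j) :=
  (J.map_tsum (hB.summable hx j)).symm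

-- After normalization, an entry of a solution lies in a compact set independent of the solution.
theorem exists_mul_le_norm_clm_matrixOp [ProperSpace F] (hA : ∀ l v, ‖A l v‖ₑ ≤ α l * ‖v‖ₑ)
    (ht : ∀ j k, ‖t j k‖ₑ ≤ τ (j - k)) (hτ : ∀ l, τ l ≠ ∞) (hατ : ∑' l, α l * τ l ≠ ∞)
    (hC : C ≠ ∞) {J : E →L[ℝ] E'} (hJ : Function.Injective J) :
    ∃ c > 0, ∀ (s : ι → F) (g : ℝ), 0 < g → (∀ k, ‖s k‖ₑ ≤ C * ENNReal.ofReal g) → ∀ j,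
      g / 2 ≤ ‖matrixOp (fun j k => t j k • A (j - k)) s j‖ →
        c * g ≤ ‖J (matrixOp (fun j k => t j k • A (j - k)) s j)‖ := by
  have hCτ : ∑' l, α l * (C * τ l) ≠ ∞ := by
    simp only [mul_left_comm _ C, ENNReal.tsum_mul_left]
    exact ENNReal.mul_ne_top hC hατ
  obtain ⟨c, hc, hcJ⟩ := exists_pos_forall_le_norm_of_injective hJ
    (isCompact_image_tsum hA (fun l => ENNReal.mul_ne_top hC (hτ l)) hCτ) one_half_pos
  refine ⟨c, hc, fun s g hg hs j hj => ?_⟩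
  set y := matrixOp (fun j k => t j k • A (j - k)) s j
  set w : ι → F := fun l => g⁻¹ • t j (j - l) • s (j - l)
  have enorm_w_le (l) : ‖w l‖ₑ ≤ C * τ l := by
    have htl : ‖t j (j - l)‖ₑ ≤ τ l := by simpa only [_root_.sub_sub_cancel] using ht j (j - l)
    have hg_inv : ‖g⁻¹‖ₑ = (ENNReal.ofReal g)⁻¹ := by
      rw [Real.enorm_of_nonneg (by positivity), ENNReal.ofReal_inv_of_pos hg]
    calc ‖w l‖ₑ = (ENNReal.ofReal g)⁻¹ * (‖t j (j - l)‖ₑ * ‖s (j - l)‖ₑ) := by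
          simp only [w, enorm_smul, hg_inv]
      _ ≤ (ENNReal.ofReal g)⁻¹ * (τ l * (C * ENNReal.ofReal g)) := by gcongr; exact hs _
      _ = (ENNReal.ofReal g)⁻¹ * ENNReal.ofReal g * (C * τ l) := by ring
      _ = C * τ l := by
          rw [ENNReal.inv_mul_cancel (by simpa using hg) ofReal_ne_top, one_mul]
  have tsum_w : ∑' l, A l (w l) = g⁻¹ • y := by
    rw [show y = ∑' k, (t j k • A (j - k)) (s k) from rfl, ← tsum_const_smul'',
      ← (Equiv.subLeft j).tsum_eq]
    refine tsum_congr fun l => ?_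
    simp only [w, Equiv.subLeft_apply, _root_.sub_sub_cancel, map_smul, _root_.smul_apply]
  have half_le : 1 / 2 ≤ ‖g⁻¹ • y‖ := by
    rw [norm_smul, Real.norm_of_nonneg (by positivity), inv_mul_eq_div, le_div_iff₀ hg]
    linarith
  have hcy := hcJ _ ⟨w, enorm_w_le, tsum_w⟩ half_le
  rwa [map_smul, norm_smul, Real.norm_of_nonneg (by positivity), inv_mul_eq_div,
    le_div_iff₀ hg] at hcy

theorem HasBoundedSolutions.clm_comp [ProperSpace F] (hA : ∀ l v, ‖A l v‖ₑ ≤ α l * ‖v‖ₑ)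
    (ht : ∀ j k, ‖t j k‖ₑ ≤ τ (j - k)) (hτ : ∀ l, τ l ≠ ∞) (hατ : ∑' l, α l * τ l ≠ ∞)
    (hC : C ≠ ∞) {J : E →L[ℝ] E'} (hJ : Function.Injective J)
    (hP : HasBoundedSolutions (fun j k => t j k • A (j - k)) (ellNorm ∞) C) :
    ∃ C' : ℝ≥0∞, C' ≠ ∞ ∧
      HasBoundedSolutions (fun j k => J ∘L (t j k • A (j - k))) (ellNorm ∞) C' := by
  have hB := ConvDominated.smul_comp_sub hA ht hατ
  obtain ⟨c, hc, hcJ⟩ := exists_mul_le_norm_clm_matrixOp hA ht hτ hατ hC hJ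
  set B : ι → ι → F →L[ℝ] E := fun j k => t j k • A (j - k)
  have hc₀ : ENNReal.ofReal c ≠ 0 := by simpa using hc
  refine ⟨C * (ENNReal.ofReal c)⁻¹, by finiteness, fun x hx => ?_⟩
  obtain ⟨s, hs, hsC⟩ := hP x hx
  set G := ellNorm ∞ fun j => ‖matrixOp B x j‖ₑ
  have hG_top : G ≠ ∞ := hB.ellNorm_matrixOp_ne_top hx
  have hs_bdd : BddFamily s := ne_top_of_le_ne_top (ENNReal.mul_ne_top hC hG_top) hsC
  refine ⟨s, funext fun j => ?_, hsC.trans ?_⟩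
  · rw [hB.matrixOp_clm_comp J hs_bdd, hB.matrixOp_clm_comp J hx, hs]
  rw [mul_assoc]
  gcongr
  rcases eq_or_ne G 0 with hG | hG
  · simp [hG]
  obtain ⟨j, hj⟩ : ∃ j, G / 2 < ‖matrixOp B x j‖ₑ := by
    rw [← lt_iSup_iff, ← ellNorm_top]
    exact ENNReal.half_lt_self hG hG_top
  have norm_ge : G.toReal / 2 ≤ ‖matrixOp B s j‖ := by
    simpa [hs] using ENNReal.toReal_mono enorm_ne_top hj.le
  have hcG := hcJ s G.toReal (ENNReal.toReal_pos hG hG_top) (fun k => by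
    rw [ENNReal.ofReal_toReal hG_top]
    exact (le_ellNorm ∞ (fun k => ‖s k‖ₑ) k).trans hsC) j norm_ge
  calc G ≤ (ENNReal.ofReal c)⁻¹ * ‖J (matrixOp B s j)‖ₑ := by
        rw [← ENNReal.div_eq_inv_mul, ENNReal.le_div_iff_mul_le (.inl hc₀) (.inl ofReal_ne_top),
          ← ofReal_norm, ← ENNReal.ofReal_toReal hG_top, mul_comm, ← ENNReal.ofReal_mul hc.le]
        exact ENNReal.ofReal_le_ofReal hcG
    _ ≤ _ := by
        rw [hs, ← hB.matrixOp_clm_comp J hx]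
        gcongr
        exact le_ellNorm ∞ (fun j => ‖matrixOp (fun j k => J ∘L B j k) x j‖ₑ) j

end weaken

/-! ### Amalgam norms on the tiling by unit cubes -/

section tiling

variable {d : ℕ}

/-- Lebesgue measure on the unit cube. -/
noncomputable abbrev cubeMeasure (d : ℕ) : Measure (Fin d → ℝ) := volume.restrict cube

instance isProbabilityMeasure_cubeMeasure : IsProbabilityMeasure (cubeMeasure d) :=
  ⟨by simp [cubeMeasure, cube, Real.volume_Icc_pi]⟩

/-- The index of the half-open unit cube containing a point. -/
noncomputable def cellIdx (x : Fin d → ℝ) : Fin d → ℤ := fun i => ⌊x i⌋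

theorem measurable_cellIdx : Measurable (cellIdx : (Fin d → ℝ) → Fin d → ℤ) :=
  measurable_pi_iff.2 fun i => Int.measurable_floor.comp (measurable_pi_apply i)

theorem measurableSet_cell (j : Fin d → ℤ) : MeasurableSet (cellIdx ⁻¹' {j}) :=
  measurable_cellIdx (measurableSet_singleton j)

theorem measurePreserving_cell (j : Fin d → ℤ) :
    MeasurePreserving (fun x => x + zc j) (cubeMeasure d) (volume.restrict (cellIdx ⁻¹' {j})) := by
  have translate := (measurePreserving_add_right (volume : Measure (Fin d → ℝ)) (zc j))
    |>.restrict_preimage (measurableSet_cell j)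
  have preimage_cell : (fun x => x + zc j) ⁻¹' (cellIdx ⁻¹' {j}) =
      Set.univ.pi fun i => Set.Ico ((0 : Fin d → ℝ) i) ((1 : Fin d → ℝ) i) := by
    ext x
    simp only [Set.mem_preimage, Set.mem_singleton_iff, Set.mem_univ_pi, Set.mem_Ico,
      Pi.zero_apply, Pi.one_apply, funext_iff, cellIdx, zc, Pi.add_apply, Int.floor_add_intCast,
      add_eq_right, Int.floor_eq_zero_iff]
  have halfOpen_ae_eq : (Set.univ.pi fun i => Set.Ico ((0 : Fin d → ℝ) i) ((1 : Fin d → ℝ) i))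
      =ᵐ[volume] (cube : Set (Fin d → ℝ)) := Measure.univ_pi_Ico_ae_eq_Icc
  rwa [preimage_cell, Measure.restrict_congr_set halfOpen_ae_eq] at translate

theorem measurableEmbedding_add_zc (j : Fin d → ℤ) :
    MeasurableEmbedding fun x : Fin d → ℝ => x + zc j :=
  measurableEmbedding_addRight (zc j)

theorem volume_eq_sum_cells :
    (volume : Measure (Fin d → ℝ)) = Measure.sum fun j => volume.restrict (cellIdx ⁻¹' {j}) := by
  rw [← Measure.restrict_iUnion _ measurableSet_cell, ← Set.preimage_iUnion,
    Set.iUnion_of_singleton, Set.preimage_univ, Measure.restrict_univ]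
  exact fun i j hij => Disjoint.preimage _ (Set.disjoint_singleton.2 hij)

theorem ae_volume_iff {P : (Fin d → ℝ) → Prop} :
    (∀ᵐ x, P x) ↔ ∀ j, ∀ᵐ x ∂cubeMeasure d, P (x + zc j) := by
  rw [volume_eq_sum_cells, Measure.ae_sum_iff]
  refine forall_congr' fun j => ?_
  rw [← (measurePreserving_cell j).map_eq, (measurableEmbedding_add_zc j).ae_map_iff]

theorem aestronglyMeasurable_volume_iff {G : Type*} [TopologicalSpace G]
    [TopologicalSpace.PseudoMetrizableSpace G] {f : (Fin d → ℝ) → G} :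
    AEStronglyMeasurable f volume ↔
      ∀ j, AEStronglyMeasurable (fun x => f (x + zc j)) (cubeMeasure d) := by
  rw [volume_eq_sum_cells, aestronglyMeasurable_sum_measure_iff]
  refine forall_congr' fun j => ?_
  rw [← (measurePreserving_cell j).map_eq,
    (measurableEmbedding_add_zc j).aestronglyMeasurable_map_iff]
  rfl

theorem ae_cellIdx_add (j : Fin d → ℤ) : ∀ᵐ x ∂cubeMeasure d, cellIdx (x + zc j) = j := by
  rw [← (measurableEmbedding_add_zc j).ae_map_iff (p := fun x => cellIdx x = j),
    (measurePreserving_cell j).map_eq]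
  exact ae_restrict_mem (measurableSet_cell j)

section eLpNorm

variable {G : Type*} [NormedAddCommGroup G] {p : ℝ≥0∞}

theorem eLpNorm_add_zc (f : (Fin d → ℝ) → G) (p : ℝ≥0∞) (j : Fin d → ℤ) :
    eLpNorm (fun x => f (x + zc j)) p (cubeMeasure d) =
      eLpNorm f p (volume.restrict (cellIdx ⁻¹' {j})) := by
  rw [← (measurePreserving_cell j).map_eq, (measurableEmbedding_add_zc j).eLpNorm_map_measure]
  rfl

theorem eLpNorm_volume_eq_ellNorm [Fact (1 ≤ p)] (f : (Fin d → ℝ) → G) :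
    eLpNorm f p volume = ellNorm p fun j => eLpNorm (fun x => f (x + zc j)) p (cubeMeasure d) := by
  simp only [eLpNorm_add_zc]
  rcases p.dichotomy with rfl | hp
  · rw [ellNorm_top]
    refine le_antisymm ?_ (iSup_le fun j => eLpNorm_mono_measure f Measure.restrict_le_self)
    simp only [eLpNorm_exponent_top]
    refine eLpNormEssSup_le_of_ae_enorm_bound ?_
    nth_rewrite 2 [volume_eq_sum_cells]
    refine Measure.ae_sum_iff.2 fun j => ?_
    filter_upwards [enorm_ae_le_eLpNormEssSup f (volume.restrict (cellIdx ⁻¹' {j}))] with x hx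
    exact hx.trans (le_iSup (fun j => eLpNormEssSup f (volume.restrict (cellIdx ⁻¹' {j}))) j)
  · have hp₀ : 0 < p.toReal := zero_lt_one.trans_le hp
    have hp_ne := ENNReal.toReal_pos_iff.1 hp₀
    simp only [ellNorm_eq_tsum hp, eLpNorm_eq_lintegral_rpow_enorm_toReal hp_ne.1.ne' hp_ne.2.ne,
      one_div, ENNReal.rpow_inv_rpow hp₀.ne']
    nth_rewrite 1 [volume_eq_sum_cells]
    rw [lintegral_sum_measure]

end eLpNorm

theorem amal_eq_eLpNorm (f : (Fin d → ℝ) → ℂ) (j : Fin d → ℤ) :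
    amal f j = eLpNorm (fun x => f (x + zc j)) ∞ (cubeMeasure d) := by
  rw [eLpNorm_exponent_top]
  rfl

end tiling

section amalgamNorm

variable {d : ℕ} {μ : (Fin d → ℝ) → ℝ} {f : (Fin d → ℝ) → ℂ} {p q s : ℝ≥0∞}

/-- The norm of the weighted Wiener amalgam space `W(L^q, ℓ^p_μ)`. -/
noncomputable def amalgamNorm (q p : ℝ≥0∞) (μ : (Fin d → ℝ) → ℝ) (f : (Fin d → ℝ) → ℂ) : ℝ≥0∞ :=
  ellNorm p fun j => eLpNorm (fun x => μ (zc j) • f (x + zc j)) q (cubeMeasure d)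

theorem amalgamNorm_mono_left (hqs : q ≤ s) (p : ℝ≥0∞) (μ : (Fin d → ℝ) → ℝ)
    (hf : AEStronglyMeasurable f volume) : amalgamNorm q p μ f ≤ amalgamNorm s p μ f :=
  ellNorm_mono p fun j => eLpNorm_le_eLpNorm_of_exponent_le hqs
    ((aestronglyMeasurable_volume_iff.1 hf j).const_smul (μ (zc j)))

theorem WW_eq_amalgamNorm (p : ℝ≥0∞) (hμ : ∀ x, 0 ≤ μ x) (f : (Fin d → ℝ) → ℂ) :
    WW p μ f = amalgamNorm ∞ p μ f := by
  have eLpNorm_eq (j : Fin d → ℤ) : eLpNorm (fun x => μ (zc j) • f (x + zc j)) ∞ (cubeMeasure d) =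
      amal f j * ENNReal.ofReal (μ (zc j)) := by
    rw [amal_eq_eLpNorm, mul_comm, ← Real.enorm_of_nonneg (hμ _)]
    exact eLpNorm_const_smul (μ (zc j)) (fun x => f (x + zc j)) ∞ _
  simp only [amalgamNorm, eLpNorm_eq]
  rfl

theorem lpW_eq_ellNorm (p : ℝ≥0∞) (hμ : ∀ x, 0 ≤ μ x) (c : (Fin d → ℤ) → ℂ) :
    lpW p μ c = ellNorm p fun k => ‖μ (zc k) • c k‖ₑ := by
  simp only [enorm_smul, Real.enorm_of_nonneg (hμ _), mul_comm (ENNReal.ofReal _)]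
  rfl

theorem exists_weight_comparison {ω : (Fin d → ℝ) → ℝ} (hω : Continuous ω)
    (hμ : IsModerate ω μ) : ∃ K : ℝ, ∀ (j : Fin d → ℤ), ∀ x ∈ cube,
      μ (x + zc j) ≤ K * μ (zc j) ∧ μ (zc j) ≤ K * μ (x + zc j) := by
  obtain ⟨hμ₀, C₀, hC₀, hmod⟩ := hμ
  obtain ⟨M, hM⟩ := (isCompact_Icc (a := (-1 : Fin d → ℝ)) (b := 1)).bddAbove_image
    hω.continuousOn
  have bound (x y : Fin d → ℝ) (hx : x ∈ Set.Icc (-1) 1) : μ (x + y) ≤ C₀ * M * μ y :=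
    (hmod x y).trans (by
      gcongr
      · exact hμ₀ y
      · exact hM (Set.mem_image_of_mem ω hx))
  refine ⟨C₀ * M, fun j x hx => ⟨bound x _ ⟨?_, hx.2⟩, ?_⟩⟩
  · exact (neg_nonpos.2 zero_le_one).trans hx.1
  · simpa using bound (-x) (x + zc j)
      ⟨neg_le_neg hx.2, (neg_nonpos.2 hx.1).trans zero_le_one⟩

theorem exists_amalgamNorm_le_LpW {ω : (Fin d → ℝ) → ℝ} (hω : Continuous ω)
    (hμ : IsModerate ω μ) : ∃ K : ℝ≥0∞, K ≠ ∞ ∧ ∀ (p : ℝ≥0∞) [Fact (1 ≤ p)] f,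
      amalgamNorm p p μ f ≤ K * LpW p μ f ∧ LpW p μ f ≤ K * amalgamNorm p p μ f := by
  obtain ⟨K, hK⟩ := exists_weight_comparison hω hμ
  refine ⟨ENNReal.ofReal K, ofReal_ne_top, fun p _ f => ?_⟩
  rw [LpW, eLpNorm_volume_eq_ellNorm, amalgamNorm, ← ellNorm_const_mul, ← ellNorm_const_mul]
  constructor <;> refine ellNorm_mono p fun j => eLpNorm_le_mul_eLpNorm_of_ae_le_mul ?_ p <;>
    filter_upwards [ae_restrict_mem measurableSet_Icc] with x hx <;>
    rw [norm_smul, norm_smul, ← mul_assoc, Real.norm_of_nonneg (hμ.1 _),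
      Real.norm_of_nonneg (hμ.1 _)]
  · exact mul_le_mul_of_nonneg_right (hK j x hx).2 (norm_nonneg _)
  · exact mul_le_mul_of_nonneg_right (hK j x hx).1 (norm_nonneg _)

end amalgamNorm

section pieces

variable {d : ℕ} {μ : (Fin d → ℝ) → ℝ} {f g : (Fin d → ℝ) → ℂ} {p q : ℝ≥0∞}
  {y z : (Fin d → ℤ) → Lp ℂ q (cubeMeasure d)}

/-- `y` is the family of the translates to the unit cube of the restrictions of `f` to the cubes
`j + [0,1]^d`, multiplied by `μ j`: the coordinates of `f` in `ℓ^p(ℤ^d; L^q)` under the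
identification of the latter with `W(L^q, ℓ^p_μ)`. -/
def IsPieceFamily (μ : (Fin d → ℝ) → ℝ) (f : (Fin d → ℝ) → ℂ)
    (y : (Fin d → ℤ) → Lp ℂ q (cubeMeasure d)) : Prop :=
  ∀ j, y j =ᵐ[cubeMeasure d] fun x => μ (zc j) • f (x + zc j)

theorem exists_isPieceFamily [Fact (1 ≤ p)] (hf : AEStronglyMeasurable f volume)
    (hfin : amalgamNorm q p μ f ≠ ∞) :
    ∃ y : (Fin d → ℤ) → Lp ℂ q (cubeMeasure d), IsPieceFamily μ f y := by
  have memLp (j : Fin d → ℤ) : MemLp (fun x => μ (zc j) • f (x + zc j)) q (cubeMeasure d) :=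
    ⟨(aestronglyMeasurable_volume_iff.1 hf j).const_smul (μ (zc j)),
      (le_ellNorm p (fun j => eLpNorm (fun x => μ (zc j) • f (x + zc j)) q (cubeMeasure d)) j)
        |>.trans_lt hfin.lt_top⟩
  exact ⟨fun j => (memLp j).toLp, fun j => (memLp j).coeFn_toLp⟩

theorem exists_isPieceFamily_of_pieces (hμ : ∀ x, μ x ≠ 0)
    (y : (Fin d → ℤ) → Lp ℂ q (cubeMeasure d)) : ∃ f, IsPieceFamily μ f y := by
  refine ⟨fun x => (μ (zc (cellIdx x)))⁻¹ • y (cellIdx x) (x - zc (cellIdx x)), fun j => ?_⟩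
  filter_upwards [ae_cellIdx_add j] with x hx
  simp only [hx]
  rw [add_sub_cancel_right, smul_inv_smul₀ (hμ _)]

namespace IsPieceFamily

theorem sub (hf : IsPieceFamily μ f y) (hg : IsPieceFamily μ g z) :
    IsPieceFamily μ (f - g) (y - z) := fun j => by
  filter_upwards [Lp.coeFn_sub (y j) (z j), hf j, hg j] with x hsub hfx hgx
  rw [Pi.sub_apply, hsub, Pi.sub_apply, hfx, hgx, Pi.sub_apply, smul_sub]

theorem sum {ι : Type*} {s : Finset ι} {f : ι → (Fin d → ℝ) → ℂ}
    {y : ι → (Fin d → ℤ) → Lp ℂ q (cubeMeasure d)} (h : ∀ i ∈ s, IsPieceFamily μ (f i) (y i)) :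
    IsPieceFamily μ (∑ i ∈ s, f i) (∑ i ∈ s, y i) := fun j => by
  rw [Finset.sum_apply]
  filter_upwards [Lp.coeFn_finsetSum s fun i => y i j,
    (Finset.eventually_all s).2 fun i hi => h i hi j] with x hsum hx
  rw [hsum, Finset.sum_apply, Finset.sum_apply, Finset.smul_sum]
  exact Finset.sum_congr rfl hx

theorem congr_ae (hf : IsPieceFamily μ f y) (hfg : f =ᵐ[volume] g) : IsPieceFamily μ g y :=
  fun j => by
  filter_upwards [hf j, ae_volume_iff.1 hfg j] with x hfx hfgx
  rw [hfx, hfgx]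

theorem unique (hy : IsPieceFamily μ f y) (hz : IsPieceFamily μ f z) : y = z :=
  funext fun j => Lp.ext ((hy j).trans (hz j).symm)

theorem ae_eq (hμ : ∀ x, μ x ≠ 0) (hf : IsPieceFamily μ f y) (hg : IsPieceFamily μ g y) :
    f =ᵐ[volume] g := ae_volume_iff.2 fun j => by
  filter_upwards [hf j, hg j] with x hfx hgx
  exact smul_right_injective ℂ (hμ (zc j)) (hfx.symm.trans hgx)

theorem aestronglyMeasurable (hμ : ∀ x, μ x ≠ 0) (hf : IsPieceFamily μ f y) :
    AEStronglyMeasurable f volume :=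
  aestronglyMeasurable_volume_iff.2 fun j =>
    (aestronglyMeasurable_const_smul_iff₀ (hμ (zc j))).1
      ((Lp.aestronglyMeasurable (y j)).congr (hf j))

theorem ellNorm_eq (hf : IsPieceFamily μ f y) (p : ℝ≥0∞) :
    ellNorm p (fun j => ‖y j‖ₑ) = amalgamNorm q p μ f := by
  simp only [Lp.enorm_def, eLpNorm_congr_ae (hf _)]
  rfl

end IsPieceFamily

end pieces

/-! ### The synthesis operator as a matrix of operators -/

section synthesis

variable {d r : ℕ} {μ : (Fin d → ℝ) → ℝ} {Φ : Fin r → (Fin d → ℝ) → ℂ} {p q : ℝ≥0∞}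

/-- The translate to the unit cube of the restriction of `f` to the `j`-th unit cube, as an element
of `L^q`; it is zero if this restriction is not in `L^q`. -/
noncomputable def piece (q : ℝ≥0∞) (f : (Fin d → ℝ) → ℂ) (j : Fin d → ℤ) :
    Lp ℂ q (cubeMeasure d) :=
  open Classical in
  if h : MemLp (fun x => f (x + zc j)) q (cubeMeasure d) then h.toLp _ else 0

theorem coeFn_piece {f : (Fin d → ℝ) → ℂ} {j : Fin d → ℤ}
    (h : MemLp (fun x => f (x + zc j)) q (cubeMeasure d)) :
    piece q f j =ᵐ[cubeMeasure d] fun x => f (x + zc j) := by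
  rw [piece, dif_pos h]
  exact h.coeFn_toLp

theorem enorm_piece_le (f : (Fin d → ℝ) → ℂ) (j : Fin d → ℤ) : ‖piece q f j‖ₑ ≤ amal f j := by
  by_cases h : MemLp (fun x => f (x + zc j)) q (cubeMeasure d)
  · rw [Lp.enorm_def, eLpNorm_congr_ae (coeFn_piece h), amal_eq_eLpNorm]
    exact eLpNorm_le_eLpNorm_of_exponent_le le_top h.1
  · rw [piece, dif_neg h, enorm_eq_nnnorm, Lp.nnnorm_zero, ENNReal.coe_zero]
    exact zero_le

/-- The map sending a coefficient vector to the corresponding combination of the generators,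
restricted to the `l`-th unit cube. -/
noncomputable def blockOp (q : ℝ≥0∞) [Fact (1 ≤ q)] (Φ : Fin r → (Fin d → ℝ) → ℂ)
    (l : Fin d → ℤ) : (Fin r → ℂ) →L[ℝ] Lp ℂ q (cubeMeasure d) :=
  ∑ i, ((ContinuousLinearMap.proj i : (Fin r → ℂ) →L[ℂ] ℂ).smulRight
    (piece q (Φ i) l)).restrictScalars ℝ

theorem blockOp_apply [Fact (1 ≤ q)] (Φ : Fin r → (Fin d → ℝ) → ℂ) (l : Fin d → ℤ)
    (v : Fin r → ℂ) : blockOp q Φ l v = ∑ i, v i • piece q (Φ i) l := by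
  simp [blockOp]

theorem enorm_blockOp_le [Fact (1 ≤ q)] (Φ : Fin r → (Fin d → ℝ) → ℂ) (l : Fin d → ℤ)
    (v : Fin r → ℂ) : ‖blockOp q Φ l v‖ₑ ≤ (∑ i, amal (Φ i) l) * ‖v‖ₑ := by
  rw [blockOp_apply, Finset.sum_mul]
  refine (enorm_sum_le _ _).trans (Finset.sum_le_sum fun i _ => ?_)
  rw [enorm_smul, mul_comm]
  exact mul_le_mul' (enorm_piece_le _ _) (enorm_le_iff_norm_le.2 (norm_le_pi_norm v i))

theorem coeFn_blockOp [Fact (1 ≤ q)] {l : Fin d → ℤ}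
    (hΦ : ∀ i, MemLp (fun x => Φ i (x + zc l)) q (cubeMeasure d)) (v : Fin r → ℂ) :
    blockOp q Φ l v =ᵐ[cubeMeasure d] fun x => ∑ i, v i * Φ i (x + zc l) := by
  rw [blockOp_apply]
  filter_upwards [Lp.coeFn_finsetSum Finset.univ fun i => v i • piece q (Φ i) l,
    ae_all_iff.2 fun i => Lp.coeFn_smul (v i) (piece q (Φ i) l),
    ae_all_iff.2 fun i => coeFn_piece (hΦ i)] with x hsum hsmul hpiece
  simp only [hsum, Finset.sum_apply, hsmul, Pi.smul_apply, hpiece, smul_eq_mul]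

/-- The matrix of the synthesis operator between weighted sequence spaces. -/
noncomputable def synMat (q : ℝ≥0∞) [Fact (1 ≤ q)] (μ : (Fin d → ℝ) → ℝ)
    (Φ : Fin r → (Fin d → ℝ) → ℂ) (j k : Fin d → ℤ) :
    (Fin r → ℂ) →L[ℝ] Lp ℂ q (cubeMeasure d) :=
  (μ (zc j) / μ (zc k)) • blockOp q Φ (j - k)

/-- The coefficients `c`, multiplied by the weight. -/
noncomputable def weighted (μ : (Fin d → ℝ) → ℝ) (c : Fin r → (Fin d → ℤ) → ℂ)
    (k : Fin d → ℤ) : Fin r → ℂ :=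
  μ (zc k) • fun i => c i k

theorem exists_weighted_eq (hμ : ∀ x, μ x ≠ 0) (u : (Fin d → ℤ) → Fin r → ℂ) :
    ∃ c, weighted μ c = u :=
  ⟨fun i k => (μ (zc k))⁻¹ • u k i, funext fun k => smul_inv_smul₀ (hμ _) (u k)⟩

theorem ellNorm_weighted_ne_top_iff [Fact (1 ≤ p)] (hμ : ∀ x, 0 ≤ μ x)
    (c : Fin r → (Fin d → ℤ) → ℂ) :
    ellNorm p (fun k => ‖weighted μ c k‖ₑ) ≠ ∞ ↔ ∀ i, lpW p μ (c i) < ∞ := by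
  simp only [lpW_eq_ellNorm p hμ, lt_top_iff_ne_top]
  have enorm_le_sum (v : Fin r → ℂ) : ‖v‖ₑ ≤ ∑ i, ‖v i‖ₑ := by
    simp only [enorm_eq_nnnorm, ← ENNReal.ofNNReal_finsetSum]
    gcongr
    exact pi_nnnorm_le_iff.2 fun i =>
      Finset.single_le_sum_of_canonicallyOrdered (f := fun i => ‖v i‖₊) (Finset.mem_univ i)
  refine ⟨fun h i => ne_top_of_le_ne_top h (ellNorm_mono p fun k => ?_), fun h => ?_⟩
  · exact enorm_le_iff_norm_le.2 (norm_le_pi_norm (weighted μ c k) i)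
  · exact ne_top_of_le_ne_top (ENNReal.sum_ne_top.2 fun i _ => h i)
      ((ellNorm_mono p fun k => enorm_le_sum _).trans (ellNorm_sum_le _ _))

theorem weighted_eq_sum_single (c : Fin r → (Fin d → ℤ) → ℂ) :
    weighted μ c = ∑ i, weighted μ (Pi.single i (c i)) := by
  ext k i
  rw [Finset.sum_apply, Finset.sum_apply]
  simp only [weighted, Pi.smul_apply, ← Finset.smul_sum]
  rw [← Finset.sum_apply k, ← Finset.sum_apply i, Finset.univ_sum_single]

theorem enorm_weighted_single_le (c : Fin r → (Fin d → ℤ) → ℂ) (i : Fin r) (k : Fin d → ℤ) :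
    ‖weighted μ (Pi.single i (c i)) k‖ₑ ≤ ‖weighted μ c k‖ₑ := by
  rw [weighted, weighted, enorm_smul, enorm_smul]
  gcongr
  refine enorm_le_iff_norm_le.2 ((pi_norm_le_iff_of_nonneg (norm_nonneg _)).2 fun i' => ?_)
  rcases eq_or_ne i' i with rfl | hi'
  · rw [Pi.single_eq_same]
    exact norm_le_pi_norm (fun i => c i k) i'
  · simp [hi']

theorem synOp_eq_sum_semiConv (Φ : Fin r → (Fin d → ℝ) → ℂ) (c : Fin r → (Fin d → ℤ) → ℂ) :
    SynOp Φ c = ∑ i, semiConv (Φ i) (c i) := by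
  ext x
  simp only [SynOp, semiConv, Finset.sum_apply]

end synthesis

/-! ### Closedness of shift-invariant spaces -/

section inclusion

variable {α E : Type*} [MeasurableSpace α] {ν : Measure α} [IsProbabilityMeasure ν]
  [NormedAddCommGroup E] [NormedSpace ℝ E] {p q : ℝ≥0∞} [Fact (1 ≤ p)] [Fact (1 ≤ q)]

/-- The inclusion of `L^q` in `L^p`, for `p ≤ q`, over a probability space. -/
noncomputable def lpInclusion (hpq : p ≤ q) : Lp E q ν →L[ℝ] Lp E p ν :=
  LinearMap.mkContinuous
    { toFun := AddSubgroup.inclusion (Lp.antitone hpq)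
      map_add' := map_add _
      map_smul' _ _ := rfl } 1 fun y => by
    rw [one_mul]
    exact ENNReal.toReal_mono (Lp.eLpNorm_ne_top y)
      (eLpNorm_le_eLpNorm_of_exponent_le hpq (Lp.aestronglyMeasurable y))

theorem lpInclusion_injective (hpq : p ≤ q) :
    Function.Injective (lpInclusion hpq : Lp E q ν → Lp E p ν) :=
  AddSubgroup.inclusion_injective (Lp.antitone hpq)

end inclusion

/-- A positive weight `μ` moderated by `ω`, and generators in `W^1_ω`. -/
structure Admissible {d r : ℕ} (ω μ : (Fin d → ℝ) → ℝ) (C₀ : ℝ)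
    (Φ : Fin r → (Fin d → ℝ) → ℂ) : Prop where
  continuous_weight : Continuous ω
  pos : ∀ x, 0 < μ x
  const_pos : 0 < C₀
  moderate : ∀ x y, μ (x + y) ≤ C₀ * ω x * μ y
  measurable : ∀ i, AEStronglyMeasurable (Φ i) volume
  amalgam : ∀ i, WW 1 ω (Φ i) < ∞

/-- `V^p_μ(Φ)` is closed in `W(L^s, ℓ^p_μ)`. -/
def IsAmalgamClosed {d r : ℕ} (s p : ℝ≥0∞) (μ : (Fin d → ℝ) → ℝ)
    (Φ : Fin r → (Fin d → ℝ) → ℂ) : Prop :=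
  ∀ f, AEStronglyMeasurable f volume → amalgamNorm s p μ f ≠ ∞ →
    ∀ F : ℕ → (Fin d → ℝ) → ℂ, (∀ n, F n ∈ VSI p μ Φ) →
      Tendsto (fun n => amalgamNorm s p μ (f - F n)) atTop (𝓝 0) → f ∈ VSI p μ Φ

theorem zc_sub {d : ℕ} (j k : Fin d → ℤ) : zc (j - k) = zc j - zc k := by
  ext i
  simp [zc]

namespace Admissible

variable {d r : ℕ} {ω μ : (Fin d → ℝ) → ℝ} {C₀ : ℝ} {Φ : Fin r → (Fin d → ℝ) → ℂ}
  {p q s t : ℝ≥0∞} [Fact (1 ≤ p)] [Fact (1 ≤ q)] [Fact (1 ≤ s)] [Fact (1 ≤ t)]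

theorem ne_zero (H : Admissible ω μ C₀ Φ) (x : Fin d → ℝ) : μ x ≠ 0 := (H.pos x).ne'

theorem nonneg (H : Admissible ω μ C₀ Φ) (x : Fin d → ℝ) : 0 ≤ μ x := (H.pos x).le

theorem isModerate (H : Admissible ω μ C₀ Φ) : IsModerate ω μ :=
  ⟨H.nonneg, C₀, H.const_pos, H.moderate⟩

theorem modulus_pos (H : Admissible ω μ C₀ Φ) (x : Fin d → ℝ) : 0 < C₀ * ω x :=
  pos_of_mul_pos_left ((H.pos (x + 0)).trans_le (H.moderate x 0)) (H.nonneg 0)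

theorem enorm_ratio_le (H : Admissible ω μ C₀ Φ) (j k : Fin d → ℤ) :
    ‖μ (zc j) / μ (zc k)‖ₑ ≤ ENNReal.ofReal (C₀ * ω (zc (j - k))) := by
  rw [Real.enorm_of_nonneg (div_nonneg (H.nonneg _) (H.nonneg _))]
  refine ENNReal.ofReal_le_ofReal ((div_le_iff₀ (H.pos _)).2 ?_)
  simpa [zc_sub] using H.moderate (zc (j - k)) (zc k)

theorem tsum_decay_ne_top (H : Admissible ω μ C₀ Φ) :
    ∑' l, (∑ i, amal (Φ i) l) * ENNReal.ofReal (C₀ * ω (zc l)) ≠ ∞ := by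
  have generator_ne_top (i : Fin r) : ∑' l, amal (Φ i) l * ENNReal.ofReal (ω (zc l)) ≠ ∞ := by
    simpa [WW] using (H.amalgam i).ne
  simp only [ENNReal.ofReal_mul H.const_pos.le, mul_left_comm _ (ENNReal.ofReal C₀),
    Finset.sum_mul, ENNReal.tsum_mul_left]
  rw [Summable.tsum_finsetSum fun i _ => ENNReal.summable]
  exact ENNReal.mul_ne_top ofReal_ne_top (ENNReal.sum_ne_top.2 fun i _ => generator_ne_top i)

theorem amal_ne_top (H : Admissible ω μ C₀ Φ) (i : Fin r) (l : Fin d → ℤ) :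
    amal (Φ i) l ≠ ∞ := by
  have decay_ne_top := ENNReal.ne_top_of_tsum_ne_top H.tsum_decay_ne_top l
  have sum_ne_top : ∑ i, amal (Φ i) l ≠ ∞ := fun h => decay_ne_top <| by
    rw [h, ENNReal.top_mul (ENNReal.ofReal_pos.2 (H.modulus_pos _)).ne']
  exact ENNReal.sum_ne_top.1 sum_ne_top i (Finset.mem_univ i)

theorem memLp_generator (H : Admissible ω μ C₀ Φ) (q : ℝ≥0∞) (i : Fin r) (l : Fin d → ℤ) :
    MemLp (fun x => Φ i (x + zc l)) q (cubeMeasure d) := by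
  refine MemLp.mono_exponent (q := ∞) ⟨aestronglyMeasurable_volume_iff.1 (H.measurable i) l, ?_⟩
    le_top
  rw [← amal_eq_eLpNorm]
  exact (H.amal_ne_top i l).lt_top

variable (s) in
theorem convDominated (H : Admissible ω μ C₀ Φ) : ConvDominated (synMat s μ Φ)
    fun l => (∑ i, amal (Φ i) l) * ENNReal.ofReal (C₀ * ω (zc l)) :=
  .smul_comp_sub (enorm_blockOp_le Φ) H.enorm_ratio_le H.tsum_decay_ne_top

theorem lpInclusion_comp_synMat (H : Admissible ω μ C₀ Φ) (hst : s ≤ t) (j k : Fin d → ℤ) :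
    lpInclusion hst ∘L synMat t μ Φ j k = synMat s μ Φ j k := by
  have inclusion_piece (i : Fin r) (l : Fin d → ℤ) :
      lpInclusion hst (piece t (Φ i) l) = piece s (Φ i) l :=
    Lp.ext ((coeFn_piece (H.memLp_generator t i l)).trans
      (coeFn_piece (H.memLp_generator s i l)).symm)
  have inclusion_smul (z : ℂ) (y : Lp ℂ t (cubeMeasure d)) :
      lpInclusion hst (z • y) = z • lpInclusion hst y := rfl
  ext1 v
  simp only [synMat, _root_.smul_apply, ContinuousLinearMap.comp_apply, map_smul, blockOp_apply,
    map_sum, inclusion_smul, inclusion_piece]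

theorem coeFn_synMat_weighted (H : Admissible ω μ C₀ Φ) (c : Fin r → (Fin d → ℤ) → ℂ)
    (j k : Fin d → ℤ) : synMat s μ Φ j k (weighted μ c k) =ᵐ[cubeMeasure d]
      fun x => μ (zc j) • ∑ i, c i k * Φ i (x + zc (j - k)) := by
  have unweight : synMat s μ Φ j k (weighted μ c k) =
      μ (zc j) • blockOp s Φ (j - k) fun i => c i k := by
    rw [synMat, weighted, _root_.smul_apply, map_smul, smul_smul, div_mul_cancel₀ _ (H.ne_zero _)]
  rw [unweight]
  filter_upwards [Lp.coeFn_smul (μ (zc j)) (blockOp s Φ (j - k) fun i => c i k),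
    coeFn_blockOp (q := s) (fun i => H.memLp_generator s i (j - k)) fun i => c i k]
    with x hsmul hblock
  rw [hsmul, Pi.smul_apply, hblock]

theorem isPieceFamily_semiConv (H : Admissible ω μ C₀ Φ) {i : Fin r} {a : (Fin d → ℤ) → ℂ}
    (ha : BddFamily (weighted μ (Pi.single i a))) :
    IsPieceFamily μ (semiConv (Φ i) a)
      (matrixOp (synMat s μ Φ) (weighted μ (Pi.single i a))) := fun j => by
  filter_upwards [Lp.coeFn_tsum ((H.convDominated s).tsum_enorm_ne_top ha j),
    ae_all_iff.2 (H.coeFn_synMat_weighted (s := s) (Pi.single i a) j)] with x hsum hterm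
  have sum_single (k : Fin d → ℤ) :
      ∑ i', (Pi.single i a : Fin r → (Fin d → ℤ) → ℂ) i' k * Φ i' (x + zc (j - k)) =
        a k * Φ i (x + zc (j - k)) := by
    rw [Finset.sum_eq_single_of_mem i (Finset.mem_univ i) fun i' _ hi' => by simp [hi'],
      Pi.single_eq_same]
  calc matrixOp (synMat s μ Φ) (weighted μ (Pi.single i a)) j x
      = ∑' k, μ (zc j) • (a k * Φ i (x + zc (j - k))) :=
        hsum.trans (tsum_congr fun k => by rw [hterm, sum_single])
    _ = μ (zc j) • semiConv (Φ i) a (x + zc j) := by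
        simp only [semiConv, zc_sub, add_sub_assoc]
        exact tsum_const_smul'' _

theorem isPieceFamily_synOp (H : Admissible ω μ C₀ Φ) {c : Fin r → (Fin d → ℤ) → ℂ}
    (hc : BddFamily (weighted μ c)) :
    IsPieceFamily μ (SynOp Φ c) (matrixOp (synMat s μ Φ) (weighted μ c)) := by
  have single_bdd (i : Fin r) : BddFamily (weighted μ (Pi.single i (c i))) :=
    hc.mono fun k => enorm_weighted_single_le c i k
  rw [weighted_eq_sum_single, (H.convDominated s).matrixOp_sum _ single_bdd,
    synOp_eq_sum_semiConv]
  exact .sum fun i _ => H.isPieceFamily_semiConv (single_bdd i)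

theorem LpW_ne_top_of_isPieceFamily (H : Admissible ω μ C₀ Φ) {f : (Fin d → ℝ) → ℂ}
    {y : (Fin d → ℤ) → Lp ℂ ∞ (cubeMeasure d)} (hf : IsPieceFamily μ f y)
    (hy : ellNorm p (fun j => ‖y j‖ₑ) ≠ ∞) : LpW p μ f ≠ ∞ := by
  obtain ⟨K, hK, equivalence⟩ := exists_amalgamNorm_le_LpW H.continuous_weight H.isModerate
  refine ne_top_of_le_ne_top (ENNReal.mul_ne_top hK (hf.ellNorm_eq p ▸ hy))
    ((equivalence p f).2.trans ?_)
  gcongr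
  exact amalgamNorm_mono_left le_top p μ (hf.aestronglyMeasurable H.ne_zero)

theorem mem_VSI_iff (H : Admissible ω μ C₀ Φ) {f : (Fin d → ℝ) → ℂ} : f ∈ VSI p μ Φ ↔
    ∃ u : lp (fun _ : Fin d → ℤ => Fin r → ℂ) p,
      IsPieceFamily μ f ((H.convDominated s).lpMap p u) := by
  constructor
  · rintro ⟨-, -, c, hc, hfc⟩
    have hc_fin := (ellNorm_weighted_ne_top_iff H.nonneg c).2 hc
    exact ⟨⟨weighted μ c, memℓp_iff_ellNorm_ne_top.2 hc_fin⟩,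
      (H.isPieceFamily_synOp (.of_ellNorm hc_fin)).congr_ae hfc.symm⟩
  · rintro ⟨⟨u, hu⟩, hf⟩
    obtain ⟨c, rfl⟩ := exists_weighted_eq H.ne_zero u
    have hc_fin := memℓp_iff_ellNorm_ne_top.1 hu
    have hfc : f =ᵐ[volume] SynOp Φ c :=
      hf.ae_eq H.ne_zero (H.isPieceFamily_synOp (.of_ellNorm hc_fin))
    have f_pieces : IsPieceFamily μ f (matrixOp (synMat ∞ μ Φ) (weighted μ c)) :=
      (H.isPieceFamily_synOp (.of_ellNorm hc_fin)).congr_ae hfc.symm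
    exact ⟨hf.aestronglyMeasurable H.ne_zero, (H.LpW_ne_top_of_isPieceFamily f_pieces
      ((H.convDominated ∞).ellNorm_matrixOp_ne_top hc_fin)).lt_top, c,
      (ellNorm_weighted_ne_top_iff H.nonneg c).1 hc_fin, hfc⟩

theorem tendsto_lp_iff {f : (Fin d → ℝ) → ℂ} {F : ℕ → (Fin d → ℝ) → ℂ}
    {y : lp (fun _ : Fin d → ℤ => Lp ℂ s (cubeMeasure d)) p}
    {Y : ℕ → lp (fun _ : Fin d → ℤ => Lp ℂ s (cubeMeasure d)) p} (hf : IsPieceFamily μ f y)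
    (hF : ∀ n, IsPieceFamily μ (F n) (Y n)) :
    Tendsto Y atTop (𝓝 y) ↔ Tendsto (fun n => amalgamNorm s p μ (f - F n)) atTop (𝓝 0) := by
  rw [tendsto_iff_edist_tendsto_0]
  refine tendsto_congr fun n => ?_
  rw [edist_comm, edist_eq_enorm_sub, enorm_lp_eq_ellNorm]
  exact (hf.sub (hF n)).ellNorm_eq p

theorem isAmalgamClosed_iff (H : Admissible ω μ C₀ Φ) :
    IsAmalgamClosed s p μ Φ ↔ IsClosed (Set.range ((H.convDominated s).lpMap p)) := by
  constructor
  · intro hcl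
    refine IsSeqClosed.isClosed fun Y y hY hlim => ?_
    obtain ⟨f, hf⟩ := exists_isPieceFamily_of_pieces H.ne_zero y
    choose F hF using fun n => exists_isPieceFamily_of_pieces H.ne_zero (Y n)
    have hfin : amalgamNorm s p μ f ≠ ∞ := by
      rw [← hf.ellNorm_eq, ← enorm_lp_eq_ellNorm]
      exact enorm_ne_top
    have hFV (n : ℕ) : F n ∈ VSI p μ Φ := by
      obtain ⟨u, hu⟩ := hY n
      exact H.mem_VSI_iff.2 ⟨u, hu ▸ hF n⟩
    obtain ⟨u, hu⟩ := (H.mem_VSI_iff (s := s)).1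
      (hcl f (hf.aestronglyMeasurable H.ne_zero) hfin F hFV ((tendsto_lp_iff hf hF).1 hlim))
    exact ⟨u, Subtype.ext (hu.unique hf)⟩
  · intro hcl f hmeas hfin F hF hlim
    obtain ⟨y, hf⟩ := exists_isPieceFamily (p := p) hmeas hfin
    have hy : Memℓp y p := memℓp_iff_ellNorm_ne_top.2 (by rwa [hf.ellNorm_eq])
    choose u hu using fun n => (H.mem_VSI_iff (s := s)).1 (hF n)
    obtain ⟨v, hv⟩ := hcl.mem_of_tendsto ((tendsto_lp_iff (p := p) (y := ⟨y, hy⟩) hf hu).2 hlim)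
      (.of_forall fun n => Set.mem_range_self (u n))
    refine (H.mem_VSI_iff (s := s)).2 ⟨v, ?_⟩
    rwa [hv]

theorem exponent_independent (H : Admissible ω μ C₀ Φ) (hst : s ≤ t)
    (hcl : IsAmalgamClosed t p μ Φ) : IsAmalgamClosed s q μ Φ := by
  obtain ⟨C, hC, sol_p⟩ := (H.convDominated t).isClosed_range_lpMap_iff.1
    (H.isAmalgamClosed_iff.1 hcl)
  obtain ⟨C₁, hC₁, sol_top⟩ := sol_p.exponent_independent (q := ∞) (H.convDominated t) hC
  obtain ⟨C₂, hC₂, sol_incl⟩ := sol_top.clm_comp (enorm_blockOp_le Φ) H.enorm_ratio_le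
    (fun _ => ofReal_ne_top) H.tsum_decay_ne_top hC₁ (lpInclusion_injective hst)
  have sol_s : HasBoundedSolutions (synMat s μ Φ) (ellNorm ∞) C₂ := by
    convert sol_incl using 3 with j k
    exact (H.lpInclusion_comp_synMat hst j k).symm
  exact H.isAmalgamClosed_iff.2 ((H.convDominated s).isClosed_range_lpMap_iff.2
    (sol_s.exponent_independent (H.convDominated s) hC₂))

end Admissible

section closedness

variable {d r : ℕ} {ω μ : (Fin d → ℝ) → ℝ} {Φ : Fin r → (Fin d → ℝ) → ℂ} {p q s t : ℝ≥0∞}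

theorem IsAmalgamClosed.mono (hcl : IsAmalgamClosed s p μ Φ) (hst : s ≤ t) :
    IsAmalgamClosed t p μ Φ := fun f hf hfin F hF hlim =>
  hcl f hf (ne_top_of_le_ne_top hfin (amalgamNorm_mono_left hst p μ hf)) F hF
    (tendsto_of_tendsto_of_tendsto_of_le_of_le tendsto_const_nhds hlim (fun _ => zero_le)
      fun n => amalgamNorm_mono_left hst p μ (hf.sub (hF n).1))

theorem vClosedW_iff (hμ : ∀ x, 0 ≤ μ x) : VClosedW p μ Φ ↔ IsAmalgamClosed ∞ p μ Φ := by
  simp only [VClosedW, IsAmalgamClosed, WW_eq_amalgamNorm p hμ, lt_top_iff_ne_top]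

theorem IsAmalgamClosed.vClosedL [Fact (1 ≤ p)] (hcl : IsAmalgamClosed p p μ Φ)
    (hω : Continuous ω) (hμ : IsModerate ω μ) : VClosedL p μ Φ := by
  obtain ⟨K, hK, equivalence⟩ := exists_amalgamNorm_le_LpW hω hμ
  intro f hf hfin F hF hlim
  refine hcl f hf (ne_top_of_le_ne_top (ENNReal.mul_ne_top hK hfin.ne) (equivalence p f).1) F hF ?_
  refine tendsto_of_tendsto_of_tendsto_of_le_of_le tendsto_const_nhds ?_ (fun _ => zero_le)
    fun n => (equivalence p _).1
  simpa using ENNReal.Tendsto.const_mul hlim (Or.inr hK)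

theorem lpW_zero_weight [Fact (1 ≤ p)] (c : (Fin d → ℤ) → ℂ) : lpW p 0 c = 0 := by
  rw [lpW_eq_ellNorm (μ := 0) p fun _ => le_rfl]
  simp [ellNorm_zero]

theorem WW_zero_weight [Fact (1 ≤ p)] (f : (Fin d → ℝ) → ℂ) : WW p 0 f = 0 := by
  rw [WW_eq_amalgamNorm (μ := 0) p fun _ => le_rfl]
  simp only [amalgamNorm, Pi.zero_apply, zero_smul, eLpNorm_zero', ellNorm_zero]

theorem LpW_zero_weight (p : ℝ≥0∞) (f : (Fin d → ℝ) → ℂ) : LpW p 0 f = 0 := by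
  simp [LpW]

theorem vClosed_zero_weight [Fact (1 ≤ p)] [Fact (1 ≤ q)] (h : VClosedW p 0 Φ) :
    VClosedL q 0 Φ ∧ VClosedW q 0 Φ := by
  have VSI_eq : VSI q 0 Φ = VSI p 0 Φ := by simp only [VSI, LpW_zero_weight, lpW_zero_weight]
  constructor <;>
    simpa only [VClosedL, VClosedW, VSI_eq, LpW_zero_weight, WW_zero_weight] using h

end closedness

end ShiftInvariant

theorem closedness_independent_of_p_general {d r : ℕ} {ω μ : (Fin d → ℝ) → ℝ}
    (hω : Continuous ω) (hμ : IsModerate ω μ) {Φ : Fin r → (Fin d → ℝ) → ℂ}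
    (hm : ∀ i, AEStronglyMeasurable (Φ i) volume) (hΦ : ∀ i, WW 1 ω (Φ i) < ∞)
    {p₀ p : ℝ≥0∞} (hp₀ : 1 ≤ p₀) (hp : 1 ≤ p) (hclosed : VClosedW p₀ μ Φ) :
    VClosedL p μ Φ ∧ VClosedW p μ Φ := by
  have : Fact (1 ≤ p₀) := ⟨hp₀⟩
  have : Fact (1 ≤ p) := ⟨hp⟩
  have ⟨hμ₀, C₀, hC₀, hmod⟩ := hμ
  by_cases hpos : ∀ x, 0 < μ x
  · have H : ShiftInvariant.Admissible ω μ C₀ Φ := ⟨hω, hpos, hC₀, hmod, hm, hΦ⟩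
    have hcl : ShiftInvariant.IsAmalgamClosed 1 p μ Φ :=
      H.exponent_independent le_top ((ShiftInvariant.vClosedW_iff hμ₀).1 hclosed)
    exact ⟨(hcl.mono hp).vClosedL hω hμ, (ShiftInvariant.vClosedW_iff hμ₀).2 (hcl.mono le_top)⟩
  · obtain ⟨a, ha⟩ := not_forall.1 hpos
    obtain rfl : μ = 0 := funext fun x => le_antisymm
      (by simpa [(not_lt.1 ha).antisymm (hμ₀ a)] using hmod (x - a) a) (hμ₀ x)
    exact ShiftInvariant.vClosed_zero_weight hclosed

/-- Corollary 3.10 ii: if `V^{p₀}_μ(Φ)` is closed in `L^{p₀}_μ` and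
`W^{p₀}_μ` for some `p₀ ∈ [1,∞]`, then `V^p_μ(Φ)` is closed in `L^p_μ` and `W^p_μ`
for every `p ∈ [1,∞]`. -/
theorem closedness_independent_of_p {d r : ℕ} (ω μ : (Fin d → ℝ) → ℝ)
    (hω : IsWeight ω) (hμ : IsModerate ω μ)
    (Φ : Fin r → (Fin d → ℝ) → ℂ)
    (hm : ∀ i, AEStronglyMeasurable (Φ i) volume)
    (hΦ : ∀ i, WW 1 ω (Φ i) < ∞)
    (p₀ : ℝ≥0∞) (hp₀ : 1 ≤ p₀)
    (hclosed : VClosedL p₀ μ Φ ∧ VClosedW p₀ μ Φ) :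
    ∀ p : ℝ≥0∞, 1 ≤ p → VClosedL p μ Φ ∧ VClosedW p μ Φ :=
  fun _ hp => closedness_independent_of_p_general hω.1 hμ hm hΦ hp₀ hp hclosed.2
end

section
/- Let Φ = (φ_i, φ_{i+1}, …, φ_{i+r}) with i ∈ ℤ and r an odd natural number (so Φ consists of an even number r+1 of successive functions φ_k). Then the function ξ ↦ rank[Φ̂(ξ+2jπ)_{j∈ℤ}] is not a constant function on ℝ. -/
open MeasureTheory Filter Topology ENNReal Real

noncomputable section

/-- weighted `ℓ^p_ν` norm of a sequence on `ℤ` -/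
def lpW1 (p : ℝ≥0∞) (ν : ℝ → ℝ) (c : ℤ → ℂ) : ℝ≥0∞ :=
  if p = ∞ then ⨆ j, (‖c j‖₊ : ℝ≥0∞) * ENNReal.ofReal (ν j)
  else (∑' j : ℤ, ((‖c j‖₊ : ℝ≥0∞) * ENNReal.ofReal (ν j)) ^ p.toReal) ^ (1 / p.toReal)

/-- weighted `L^p_ν` norm -/
def LpW1 (p : ℝ≥0∞) (ν : ℝ → ℝ) (f : ℝ → ℂ) : ℝ≥0∞ :=
  eLpNorm (fun x => ν x • f x) p volume

/-- a weight on `ℝ`: continuous, symmetric, nonnegative, submultiplicative -/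
def IsWeight1 (ω : ℝ → ℝ) : Prop :=
  Continuous ω ∧ (∀ x, ω (-x) = ω x) ∧ (∀ x, 0 ≤ ω x) ∧ ∀ x y, ω (x + y) ≤ ω x * ω y

/-- `μ` is an `ω`-moderate weight on `ℝ` -/
def IsModerate1 (ω μ : ℝ → ℝ) : Prop :=
  (∀ x, 0 ≤ μ x) ∧ ∃ C₀ > 0, ∀ x y, μ (x + y) ≤ C₀ * ω x * μ y

/-- the synthesis operator `S_Φ` on `ℝ` -/
def SynOp1 {r : ℕ} (Φ : Fin r → ℝ → ℂ) (c : Fin r → ℤ → ℂ) : ℝ → ℂ :=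
  fun x => ∑ s, ∑' j : ℤ, c s j * Φ s (x - j)

/-- the weighted shift-invariant space `V^p_μ(Φ)` on `ℝ` -/
def VSI1 {r : ℕ} (p : ℝ≥0∞) (μ : ℝ → ℝ) (Φ : Fin r → ℝ → ℂ) : Set (ℝ → ℂ) :=
  {f | AEStronglyMeasurable f volume ∧ LpW1 p μ f < ∞ ∧
    ∃ c : Fin r → ℤ → ℂ, (∀ s, lpW1 p μ (c s) < ∞) ∧ f =ᵐ[volume] SynOp1 Φ c}

/-- `{φ_{k_s}(·-j)}` is a `p`-frame for `V^p_μ(Φ)` -/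
def PFrame1 {r : ℕ} (p : ℝ≥0∞) (μ : ℝ → ℝ) (Φ : Fin r → ℝ → ℂ) : Prop :=
  ∃ C : ℝ≥0∞, 0 < C ∧ C < ∞ ∧ ∀ f ∈ VSI1 p μ Φ,
    C⁻¹ * LpW1 p μ f ≤ ∑ s, lpW1 p μ (fun j => ∫ x, f x * Φ s (x - j)) ∧
      ∑ s, lpW1 p μ (fun j => ∫ x, f x * Φ s (x - j)) ≤ C * LpW1 p μ f

/-- `V^p_μ(Φ)` is closed in `L^p_μ` -/
def VClosedL1 {r : ℕ} (p : ℝ≥0∞) (μ : ℝ → ℝ) (Φ : Fin r → ℝ → ℂ) : Prop :=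
  ∀ f : ℝ → ℂ, AEStronglyMeasurable f volume → LpW1 p μ f < ∞ →
    ∀ F : ℕ → ℝ → ℂ, (∀ n, F n ∈ VSI1 p μ Φ) →
      Tendsto (fun n => LpW1 p μ (f - F n)) atTop (𝓝 0) → f ∈ VSI1 p μ Φ

/-- the rank of `[Φ̂(ξ+2jπ)]_{j∈ℤ}` for the family `φ̂_{k_s}(ξ) = θ(ξ + k_s π)` -/
def rankθ {m : ℕ} (θ : ℝ → ℝ) (k : Fin m → ℤ) (ξ : ℝ) : ℕ :=
  Module.finrank ℂ (Submodule.span ℂ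
    (Set.range fun j : ℤ => fun s : Fin m => (θ (ξ + k s * π + 2 * j * π) : ℂ)))

/-- inverse Fourier transform, for the convention `φ̂(ξ) = ∫ φ(x) e^{-i x ξ} dx` -/
def invFT (g : ℝ → ℂ) (x : ℝ) : ℂ :=
  (1 / (2 * π) : ℝ) • ∫ ξ : ℝ, g ξ * Complex.exp (Complex.I * x * ξ)

/-- the generator `φ_k = F^{-1}(θ(·+kπ))` -/
def genφ (θ : ℝ → ℝ) (k : ℤ) : ℝ → ℂ :=
  invFT fun ξ => (θ (ξ + k * π) : ℂ)

end

open MeasureTheory Filter Topology ENNReal Real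

/-!
Since `θ` lives on an open interval of length `2π`, no coordinate is nonzero in two of the vectors
`Φ̂(ξ + 2jπ)`, so the rank is the number of nonzero ones among them. For `r + 1` successive
generators, with `ξ = x - iπ`, the entries are `θ (x + (s + 2j)π)` for `0 ≤ s ≤ r`. At `x = 0` only
`s + 2j = 0` can contribute, hence at most `⌊r/2⌋ + 1` indices `j`. If both `θ x` and `θ (x - π)`
are nonzero, the values `s + 2j = 0` and `s + 2j = -1` contribute, hence `⌊(r + 1)/2⌋ + 1` indices.
The two counts differ exactly when `r` is odd.
-/

section DisjointSupport

open Function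

variable {R ι κ : Type*}

theorem linearIndependent_of_pairwise_disjoint_support [Ring R] [NoZeroDivisors R]
    {v : ι → κ → R} (hv : ∀ i, v i ≠ 0) (hd : Pairwise (Disjoint on fun i => support (v i))) :
    LinearIndependent R v := by
  rw [linearIndependent_iff']
  intro t g hg i hi
  obtain ⟨c, hc⟩ := ne_iff.mp (hv i)
  have hother : ∀ j ∈ t, j ≠ i → g j * v j c = 0 := fun j _ hj => by
    rw [notMem_support.mp (Set.disjoint_right.mp (hd hj) hc), mul_zero]
  have hsum : ∑ j ∈ t, g j * v j c = 0 := by simpa using congrFun hg c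
  rw [Finset.sum_eq_single_of_mem i hi hother] at hsum
  exact (mul_eq_zero.mp hsum).resolve_right hc

-- If infinitely many `v i` are nonzero, both `finrank` and `ncard` take the value `0`.
theorem finrank_span_range_eq_ncard_of_pairwise_disjoint_support [CommRing R] [IsDomain R]
    {v : ι → κ → R} (hd : Pairwise (Disjoint on fun i => support (v i))) :
    Module.finrank R (Submodule.span R (Set.range v)) = {i | v i ≠ 0}.ncard := by
  have hli : LinearIndependent R fun i : {i | v i ≠ 0} => v i :=
    linearIndependent_of_pairwise_disjoint_support (fun i => i.2)
      (hd.comp_of_injective Subtype.val_injective)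
  have hrange : Set.range v \ {0} = Set.range fun i : {i | v i ≠ 0} => v i := by
    ext w
    constructor
    · rintro ⟨⟨i, rfl⟩, hi⟩
      exact ⟨⟨i, hi⟩, rfl⟩
    · rintro ⟨i, rfl⟩
      exact ⟨⟨i, rfl⟩, i.2⟩
  rw [← Submodule.span_sdiff_singleton_zero, hrange,
    Module.finrank_eq_nat_card_basis (Module.Basis.span hli), Nat.card_coe_set_eq]

end DisjointSupport

theorem support_subset_interior {X E : Type*} [TopologicalSpace X] [TopologicalSpace E] [T1Space E]
    [Zero E] {f : X → E} (hf : Continuous f) {s : Set X} (hs : Function.support f ⊆ s) :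
    Function.support f ⊆ interior s :=
  interior_maximal hs hf.isOpen_support

section Rank

variable {θ : ℝ → ℝ} (hθ : Function.support θ ⊆ Set.Ioo (-π) π)

include hθ

theorem rankθ_eq_ncard {m : ℕ} (k : Fin m → ℤ) (ξ : ℝ) :
    rankθ θ k ξ = {j : ℤ | ∃ s, θ (ξ + k s * π + 2 * j * π) ≠ 0}.ncard := by
  unfold rankθ
  rw [finrank_span_range_eq_ncard_of_pairwise_disjoint_support]
  · simp [Function.ne_iff]
  · refine fun j j' hj => Set.disjoint_left.mpr fun s hs hs' => hj ?_
    obtain ⟨h₁, h₂⟩ := hθ (Complex.ofReal_ne_zero.mp hs)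
    obtain ⟨h₁', h₂'⟩ := hθ (Complex.ofReal_ne_zero.mp hs')
    have hlt : (j : ℝ) < j' + 1 := by nlinarith [pi_pos]
    have hlt' : (j' : ℝ) < j + 1 := by nlinarith [pi_pos]
    norm_cast at hlt hlt'
    omega

theorem rankθ_successive_sub_mul_pi (i : ℤ) (r : ℕ) (x : ℝ) :
    rankθ θ (fun s : Fin (r + 1) => i + (s : ℕ)) (x - i * π) =
      {j : ℤ | ∃ s : Fin (r + 1), θ (x + ((s + 2 * j : ℤ) : ℝ) * π) ≠ 0}.ncard := by
  rw [rankθ_eq_ncard hθ]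
  congr! 5 with j s
  push_cast
  ring_nf

theorem eq_zero_of_apply_int_mul_pi_ne_zero {k : ℤ} (hk : θ (k * π) ≠ 0) : k = 0 := by
  obtain ⟨h₁, h₂⟩ := hθ hk
  have hlt : (-1 : ℝ) < k := by nlinarith [pi_pos]
  have hlt' : (k : ℝ) < 1 := by nlinarith [pi_pos]
  norm_cast at hlt hlt'
  omega

theorem apply_add_int_mul_pi_ne_zero_iff {x : ℝ} (hx : θ x ≠ 0) (hx' : θ (x - π) ≠ 0) {k : ℤ} :
    θ (x + k * π) ≠ 0 ↔ k = 0 ∨ k = -1 := by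
  constructor
  · intro hk
    obtain ⟨h₁, h₂⟩ := hθ hk
    have hlt : (-2 : ℝ) < k := by nlinarith [pi_pos, (hθ hx).2]
    have hlt' : (k : ℝ) < 1 := by nlinarith [pi_pos, (hθ hx').1]
    norm_cast at hlt hlt'
    omega
  · rintro (rfl | rfl)
    · simpa using hx
    · simpa [← sub_eq_add_neg] using hx'

theorem rankθ_successive_neg_mul_pi_le (i : ℤ) (r : ℕ) :
    rankθ θ (fun s : Fin (r + 1) => i + (s : ℕ)) (-(i * π)) ≤ r / 2 + 1 := by
  have hsub : {j : ℤ | ∃ s : Fin (r + 1), θ (0 + ((s + 2 * j : ℤ) : ℝ) * π) ≠ 0} ⊆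
      Finset.Icc (-(r / 2 : ℤ)) 0 := by
    rintro j ⟨s, hs⟩
    rw [zero_add] at hs
    have hsj := eq_zero_of_apply_int_mul_pi_ne_zero hθ hs
    rw [Finset.coe_Icc, Set.mem_Icc]
    omega
  calc rankθ θ (fun s : Fin (r + 1) => i + (s : ℕ)) (-(i * π))
      = {j : ℤ | ∃ s : Fin (r + 1), θ (0 + ((s + 2 * j : ℤ) : ℝ) * π) ≠ 0}.ncard := by
        rw [← rankθ_successive_sub_mul_pi hθ, zero_sub]
    _ ≤ (Finset.Icc (-(r / 2 : ℤ)) 0).card := by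
        rw [← Set.ncard_coe_finset]
        exact Set.ncard_le_ncard hsub (Finset.finite_toSet _)
    _ = r / 2 + 1 := by
        rw [Int.card_Icc]
        omega

theorem rankθ_successive_of_apply_ne_zero {x : ℝ} (hx : θ x ≠ 0) (hx' : θ (x - π) ≠ 0)
    (i : ℤ) (r : ℕ) :
    rankθ θ (fun s : Fin (r + 1) => i + (s : ℕ)) (x - i * π) = (r + 1) / 2 + 1 := by
  have hset : {j : ℤ | ∃ s : Fin (r + 1), (s + 2 * j : ℤ) = 0 ∨ (s + 2 * j : ℤ) = -1} =
      Finset.Icc (-((r + 1) / 2 : ℤ)) 0 := by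
    ext j
    rw [Finset.coe_Icc, Set.mem_Icc, Set.mem_ofPred_eq]
    constructor
    · rintro ⟨s, hs⟩
      omega
    · rintro ⟨hj, hj'⟩
      exact ⟨⟨min (-2 * j).toNat r, by omega⟩, by dsimp only; omega⟩
  simp only [rankθ_successive_sub_mul_pi hθ, apply_add_int_mul_pi_ne_zero_iff hθ hx hx']
  rw [hset, Set.ncard_coe_finset, Int.card_Icc]
  omega

theorem rank_not_constant_even_tuple_general {x : ℝ} (hx : θ x ≠ 0) (hx' : θ (x - π) ≠ 0)
    (i : ℤ) {r : ℕ} (hr : Odd r) :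
    ¬ ∀ ξ₁ ξ₂ : ℝ,
        rankθ θ (fun s : Fin (r + 1) => i + (s : ℕ)) ξ₁ =
          rankθ θ (fun s : Fin (r + 1) => i + (s : ℕ)) ξ₂ := by
  intro hconst
  have hle := rankθ_successive_neg_mul_pi_le hθ i r
  rw [hconst (-(i * π)) (x - i * π), rankθ_successive_of_apply_ne_zero hθ hx hx'] at hle
  obtain ⟨q, rfl⟩ := hr
  omega

end Rank

/-- Lemma 5.1 a: for an even number `r+1` (`r` odd) of successive
generators `φ_i, …, φ_{i+r}`, the rank of `[Φ̂(ξ+2jπ)_{j∈ℤ}]` is not constant in `ξ`. -/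
theorem rank_not_constant_even_tuple (ε : ℝ) (hε : 0 < ε ∧ ε < 1/4)
    (θ : ℝ → ℝ) (hθs : ContDiff ℝ (⊤ : ℕ∞) θ) (hθ0 : ∀ x, 0 ≤ θ x)
    (hθ1 : ∀ x ∈ Set.Icc (-π + ε) (π - ε), θ x = 1)
    (hθsupp : tsupport θ ⊆ Set.Icc (-π) π)
    (i : ℤ) (r : ℕ) (hr : Odd r) :
    ¬ ∀ ξ₁ ξ₂ : ℝ,
        rankθ θ (fun s : Fin (r + 1) => i + (s : ℕ)) ξ₁ =
          rankθ θ (fun s : Fin (r + 1) => i + (s : ℕ)) ξ₂ := by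
  have hsupp : Function.support θ ⊆ Set.Ioo (-π) π :=
    interior_Icc (a := -π) ▸
      support_subset_interior hθs.continuous ((subset_tsupport θ).trans hθsupp)
  have hne : ∀ x ∈ Set.Icc (-π + ε) (π - ε), θ x ≠ 0 := fun x hx =>
    (hθ1 x hx).trans_ne one_ne_zero
  refine rank_not_constant_even_tuple_general hsupp (hne (π / 2) ?_) (hne (π / 2 - π) ?_) i hr <;>
    constructor <;> linarith [pi_gt_three]
end
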